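/- arXiv:1706.01579 — 16 statements merged into one kernel-verified Lean document; each statement's English description precedes it below -/
import Mathlib

section
/- A set S ⊆ ℤ⁺ is a ladder if and only if for every positive integer n the set S ∩ nℤ (the elements of S divisible by n) is a ladder. -/
/-- A set `S ⊆ ℤ⁺` is a *ladder* if for every `k ≥ 1`, every coloring `χ : ℤ → Fin k`,
and every length `L`, there is a monochromatic arithmetic progression of length `L`
with common difference in `S`. -/
def IsLadder (S : Set ℤ) : Prop :=
  ∀ k : ℕ, 1 ≤ k → ∀ χ : ℤ → Fin k, ∀ L : ℕ,
    ∃ a : ℤ, ∃ d ∈ S, ∀ i : ℕ, i < L → χ (a + (i : ℤ) * d) = χ a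

/-- A set `S ⊆ ℤ⁺` is a ladder iff for every positive integer `n` the set of
elements of `S` divisible by `n` is a ladder. -/
theorem ladder_iff_forall_inter_multiples (S : Set ℤ) (hS : ∀ s ∈ S, 0 < s) :
    IsLadder S ↔ ∀ n : ℤ, 0 < n → IsLadder {s ∈ S | n ∣ s} := by
  constructor
  · intro h n hn k hk χ L
    lift n to ℕ using hn.le
    have hn' : 0 < n := by exact_mod_cast hn
    have hlt : ∀ x : ℤ, (x % (n : ℤ)).toNat < n := by
      intro x
      have h1 := Int.emod_nonneg x hn.ne'
      have h2 := Int.emod_lt_of_pos x hn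
      omega
    obtain ⟨a, d, hd, H⟩ := h (k * n) (Nat.mul_pos hk hn')
      (fun x => finProdFinEquiv (χ x, (⟨(x % (n : ℤ)).toNat, hlt x⟩ : Fin n))) (L + 2)
    simp only [EmbeddingLike.apply_eq_iff_eq, Prod.mk.injEq, Fin.mk.injEq] at H
    refine ⟨a, d, ⟨hd, ?_⟩, fun i hi => (H i (by omega)).1⟩
    have h1 := (H 1 (by omega)).2
    have h2 := Int.emod_nonneg (a + ((1 : ℕ) : ℤ) * d) hn.ne'
    have h3 := Int.emod_nonneg a hn.ne'
    have h4 : (a + ((1 : ℕ) : ℤ) * d) % (n : ℤ) = a % (n : ℤ) := by omega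
    have h5 := Int.ModEq.dvd (Int.ModEq.symm h4)
    simpa using h5
  · intro h k hk χ L
    obtain ⟨a, d, hd, H⟩ := h 1 one_pos k hk χ L
    exact ⟨a, d, hd.1, H⟩
end

section
/- Let S ⊆ ℤ⁺. If there exist a positive integer n, a number of colors k, a coloring χ : ℤ → Fin k, and a bound B ∈ ℕ such that every monochromatic arithmetic progression (for χ) with common difference in S ∩ nℤ has length at most B, then there exist k' ≥ 1, a coloring χ' : ℤ → Fin k', and a bound B' ∈ ℕ such that every monochromatic arithmetic progression (for χ') with common difference in S has length at most B'. -/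
/-- If for some positive integer `n` there is a finite coloring `χ : ℤ → Fin k` and a
bound `B` such that every `χ`-monochromatic arithmetic progression with common
difference in `S ∩ nℤ` has length at most `B`, then there is a finite coloring
`χ' : ℤ → Fin k'` and a bound `B'` such that every `χ'`-monochromatic arithmetic
progression with common difference in `S` has length at most `B'`. -/
theorem obstruction_lifts (S : Set ℤ) (hS : ∀ s ∈ S, 0 < s)
    (h : ∃ n : ℤ, 0 < n ∧ ∃ k : ℕ, 1 ≤ k ∧ ∃ χ : ℤ → Fin k, ∃ B : ℕ,
      ∀ a : ℤ, ∀ d ∈ S, n ∣ d → ∀ L : ℕ,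
        (∀ i : ℕ, i < L → χ (a + (i : ℤ) * d) = χ a) → L ≤ B) :
    ∃ k' : ℕ, 1 ≤ k' ∧ ∃ χ' : ℤ → Fin k', ∃ B' : ℕ,
      ∀ a : ℤ, ∀ d ∈ S, ∀ L : ℕ,
        (∀ i : ℕ, i < L → χ' (a + (i : ℤ) * d) = χ' a) → L ≤ B' := by
  obtain ⟨n, hn, k, hk, χ, B, hB⟩ := h
  have hlt : ∀ x : ℤ, (x % n).toNat < n.toNat := by
    intro x
    have h1 := Int.emod_nonneg x hn.ne'
    have h2 := Int.emod_lt_of_pos x hn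
    omega
  refine ⟨k * n.toNat, ?_, fun x => finProdFinEquiv (χ x, ⟨(x % n).toNat, hlt x⟩), B + 1, ?_⟩
  · have : 0 < n.toNat := by omega
    exact Nat.mul_pos hk this
  intro a d hd L hL
  simp only [EmbeddingLike.apply_eq_iff_eq, Prod.mk.injEq, Fin.mk.injEq] at hL
  by_cases hnd : n ∣ d
  · exact (hB a d hd hnd L fun i hi => (hL i hi).1).trans (Nat.le_succ B)
  · by_contra hlarge
    have h1 := (hL 1 (by omega)).2
    have h2 := Int.emod_nonneg (a + ((1 : ℕ) : ℤ) * d) hn.ne'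
    have h3 := Int.emod_nonneg a hn.ne'
    have h4 : (a + ((1 : ℕ) : ℤ) * d) % n = a % n := by omega
    apply hnd
    have h5 := Int.ModEq.dvd (show a ≡ a + ((1 : ℕ) : ℤ) * d [ZMOD n] from h4.symm)
    simpa using h5
end

section
/- Let S = {s₁ < s₂ < s₃ < ⋯} ⊆ ℤ⁺ and suppose there exists ε > 0 such that s_{i+1} ≥ (1+ε)·s_i for all i. Then S is not a ladder. -/
/-- Lacunary sequences of ratio at least 3 have a common badly approximated multiplier. -/
lemma exists_alpha (t : ℕ → ℝ) (ht : ∀ i, 0 < t i) (h3 : ∀ i, 3 * t i ≤ t (i + 1)) :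
    ∃ α : ℝ, ∀ i, ∃ n : ℤ, (n : ℝ) + 1 / 4 ≤ α * t i ∧ α * t i ≤ n + 3 / 4 := by
  have hex : ∃ n : ℕ → ℤ, ∀ i, n (i + 1) =
      ⌈((n i : ℝ) + 1 / 4) / t i * t (i + 1) - 1 / 4⌉ :=
    ⟨fun i => Nat.rec (motive := fun _ => ℤ) (0 : ℤ)
      (fun i (p : ℤ) => ⌈((p : ℝ) + 1 / 4) / t i * t (i + 1) - 1 / 4⌉) i, fun i => rfl⟩
  obtain ⟨n, hn⟩ := hex
  let lo : ℕ → ℝ := fun i => ((n i : ℝ) + 1 / 4) / t i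
  let hi : ℕ → ℝ := fun i => ((n i : ℝ) + 3 / 4) / t i
  have hlo : Monotone lo := by
    refine monotone_nat_of_le_succ fun i => ?_
    have h1 := Int.le_ceil (((n i : ℝ) + 1 / 4) / t i * t (i + 1) - 1 / 4)
    rw [← hn] at h1
    change _ ≤ ((n (i + 1) : ℝ) + 1 / 4) / t (i + 1)
    rw [le_div_iff₀ (ht _)]
    change ((n i : ℝ) + 1 / 4) / t i * t (i + 1) ≤ _
    linarith
  have hhi : Antitone hi := by
    refine antitone_nat_of_succ_le fun i => ?_
    have h1 := Int.ceil_lt_add_one (((n i : ℝ) + 1 / 4) / t i * t (i + 1) - 1 / 4)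
    rw [← hn] at h1
    change ((n (i + 1) : ℝ) + 3 / 4) / t (i + 1) ≤ _
    rw [div_le_iff₀ (ht _)]
    change _ ≤ ((n i : ℝ) + 3 / 4) / t i * t (i + 1)
    have h2 : ((n i : ℝ) + 3 / 4) / t i * t (i + 1)
        = ((n i : ℝ) + 1 / 4) / t i * t (i + 1) + 1 / 2 * (t (i + 1) / t i) := by ring
    have h4 : 3 ≤ t (i + 1) / t i := by
      rw [le_div_iff₀ (ht _)]; exact h3 i
    linarith
  have hle : ∀ i, lo i ≤ hi i := fun i => by
    change ((n i : ℝ) + 1 / 4) / t i ≤ ((n i : ℝ) + 3 / 4) / t i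
    have := ht i
    gcongr
    norm_num
  have hmem := hlo.ciSup_mem_iInter_Icc_of_antitone hhi hle
  refine ⟨⨆ i, lo i, fun i => ⟨n i, ?_⟩⟩
  have h := Set.mem_iInter.1 hmem i
  exact ⟨(div_le_iff₀ (ht i)).1 h.1, (le_div_iff₀ (ht i)).1 h.2⟩

/-- If `S = {s₁ < s₂ < ⋯} ⊆ ℤ⁺` satisfies `s_{i+1} ≥ (1+ε)·s_i` for all `i` and some
`ε > 0`, then `S` is not a ladder. -/
theorem not_ladder_of_exponential_growth (s : ℕ → ℤ) (hmono : StrictMono s)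
    (hpos : ∀ i, 0 < s i)
    (hgrowth : ∃ ε : ℝ, 0 < ε ∧ ∀ i : ℕ, (1 + ε) * (s i : ℝ) ≤ (s (i + 1) : ℝ)) :
    ¬ IsLadder (Set.range s) := by
  obtain ⟨ε, hε, hg⟩ := hgrowth
  obtain ⟨m, hm⟩ := pow_unbounded_of_one_lt (3 : ℝ) (by linarith : 1 < 1 + ε)
  have hposR : ∀ i, (0 : ℝ) < s i := fun i => by exact_mod_cast hpos i
  have hm0 : 0 < m := by
    rcases Nat.eq_zero_or_pos m with rfl | h
    · norm_num at hm
    · exact h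
  have hpow : ∀ j i : ℕ, (1 + ε) ^ j * (s i : ℝ) ≤ s (i + j) := by
    intro j i
    induction j with
    | zero => simp
    | succ j ih =>
      calc (1 + ε) ^ (j + 1) * (s i : ℝ) = (1 + ε) * ((1 + ε) ^ j * (s i : ℝ)) := by ring
        _ ≤ (1 + ε) * s (i + j) := by gcongr
        _ ≤ _ := hg _
  have hA : ∀ r : Fin m, ∃ α : ℝ, ∀ i, ∃ n : ℤ, (n : ℝ) + 1 / 4 ≤ α * s (r + m * i) ∧
      α * s (r + m * i) ≤ n + 3 / 4 := by
    intro r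
    refine exists_alpha (fun i => (s (r + m * i) : ℝ)) (fun i => hposR _) fun i => ?_
    have h := hpow m (r + m * i)
    have h1 := hposR (r + m * i)
    have h2 : (r : ℕ) + m * (i + 1) = r + m * i + m := by ring
    change 3 * (s (r + m * i) : ℝ) ≤ s (r + m * (i + 1))
    rw [h2]
    nlinarith
  choose α hα using hA
  have hc : ∀ y : ℝ, ⌊4 * Int.fract y⌋.toNat < 4 := by
    intro y
    have h1 := Int.fract_lt_one y
    have : ⌊4 * Int.fract y⌋ < 4 := by
      rw [Int.floor_lt]; push_cast; linarith
    omega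
  let c : ℤ → (Fin m → Fin 4) := fun x r => ⟨⌊4 * Int.fract (α r * x)⌋.toNat, hc _⟩
  let e := Fintype.equivFin (Fin m → Fin 4)
  intro hL
  obtain ⟨a, d, ⟨i, rfl⟩, h⟩ := hL _ Fintype.card_pos (fun x => e (c x)) 2
  have h1 := congrFun (e.injective (h 1 (by norm_num))) ⟨i % m, Nat.mod_lt _ hm0⟩
  obtain ⟨n, hn1, hn2⟩ := hα ⟨i % m, Nat.mod_lt _ hm0⟩ (i / m)
  simp only [Nat.mod_add_div] at hn1 hn2
  simp only [c, Fin.mk.injEq, Nat.cast_one, one_mul, Int.cast_add] at h1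
  generalize α ⟨i % m, Nat.mod_lt _ hm0⟩ = β at *
  have p1 : 0 ≤ ⌊4 * Int.fract (β * ((a : ℝ) + s i))⌋ :=
    Int.floor_nonneg.2 (by have := Int.fract_nonneg (β * ((a : ℝ) + s i)); linarith)
  have p2 : 0 ≤ ⌊4 * Int.fract (β * (a : ℝ))⌋ :=
    Int.floor_nonneg.2 (by have := Int.fract_nonneg (β * (a : ℝ)); linarith)
  have h2 : ⌊4 * Int.fract (β * ((a : ℝ) + s i))⌋ = ⌊4 * Int.fract (β * (a : ℝ))⌋ := by omega
  have h3 := abs_lt.1 (Int.abs_sub_lt_one_of_floor_eq_floor h2)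
  have e1 := Int.floor_add_fract (β * ((a : ℝ) + s i))
  have e2 := Int.floor_add_fract (β * (a : ℝ))
  have e3 : β * ((a : ℝ) + s i) = β * a + β * s i := by ring
  generalize ⌊β * ((a : ℝ) + s i)⌋ = u at *
  generalize ⌊β * (a : ℝ)⌋ = v at *
  have q1 : ((n + v : ℤ) : ℝ) < (u : ℤ) := by push_cast; linarith [h3.1, h3.2]
  have q2 : ((u : ℤ) : ℝ) < ((n + v + 1 : ℤ) : ℝ) := by push_cast; linarith [h3.1, h3.2]
  have q1' := Int.cast_lt.1 q1
  have q2' := Int.cast_lt.1 q2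
  omega
end

section
/- If S ⊆ ℤ⁺ is not a ladder, then its complement ℤ⁺ \ S is a ladder. -/
/-- The complement (within `ℤ⁺`) of a non-ladder is a ladder. -/
theorem ladder_of_compl_not_ladder (S : Set ℤ) (hS : ∀ s ∈ S, 0 < s)
    (h : ¬ IsLadder S) : IsLadder ({x : ℤ | 0 < x} \ S) := by
  unfold IsLadder at h
  push Not at h
  obtain ⟨k₁, -, χ₁, L₁, h₁⟩ := h
  intro k₂ _ χ₂ L₂
  obtain ⟨n, hn, b, c, hc⟩ := Combinatorics.exists_mono_homothetic_copy
    ((Finset.range (L₁ + L₂ + 1)).image (fun i : ℕ => (i : ℤ))) (fun x : ℤ => (χ₁ x, χ₂ x))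
  have key : ∀ i : ℕ, i < L₁ + L₂ + 1 → (χ₁ (b + i * n), χ₂ (b + i * n)) = c := by
    intro i hi
    have := hc i (Finset.mem_image.2 ⟨i, Finset.mem_range.2 hi, rfl⟩)
    rw [← this, nsmul_eq_mul, mul_comm, add_comm]
  have k0 := key 0 (by omega)
  simp only [Nat.cast_zero, zero_mul, add_zero] at k0
  have key' : ∀ i : ℕ, i < L₁ + L₂ + 1 →
      χ₁ (b + i * n) = χ₁ b ∧ χ₂ (b + i * n) = χ₂ b := by
    intro i hi
    exact Prod.mk.inj ((key i hi).trans k0.symm)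
  refine ⟨b, n, ⟨by simpa using hn, fun hnS => ?_⟩, fun i hi => (key' i (by omega)).2⟩
  obtain ⟨i, hi, hne⟩ := h₁ b n hnS
  exact hne (key' i (by omega)).1
end

section
/- Let P be a nonconstant polynomial with integer coefficients, positive leading coefficient, and P(0) = 0. If a set S ⊆ ℤ⁺ contains P(ℤ) ∩ ℤ⁺ (all positive values taken by P on the integers), then S is a ladder. -/
open Polynomial in
/-- Weight vector of a finite system of polynomials (number of leading coefficients by degree). -/
noncomputable def petWeight (A : Finset ℤ[X]) : ℕ →₀ ℕ :=
  Finsupp.onFinset (A.image natDegree)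
    (fun i => ((A.filter (fun p => p.natDegree = i)).image leadingCoeff).card) (by
      intro i hi
      rw [← Nat.pos_iff_ne_zero, Finset.card_pos] at hi
      obtain ⟨c, hc⟩ := hi
      simp only [Finset.mem_image, Finset.mem_filter] at hc ⊢
      obtain ⟨p, ⟨h1, h2⟩, -⟩ := hc
      exact ⟨p, h1, h2⟩)

theorem petWeight_wf : WellFounded (fun x y : ℕ →₀ ℕ => ∃ i, (∀ j, i < j → x j = y j) ∧ x i < y i) := by
  have h := Finsupp.Lex.wellFounded' (α := ℕ) (N := ℕ) (r := (· > ·)) (s := (· < ·))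
    (fun n => Nat.not_lt_zero n) wellFounded_lt wellFounded_lt
  exact h

open Polynomial in
/-- One van der Corput type difference. -/
noncomputable def petQ (p₁ p : ℤ[X]) (d : ℤ) : ℤ[X] := taylor d p - C (p.eval d) - p₁

open Polynomial in
theorem petQ_eval (p₁ p : ℤ[X]) (d x : ℤ) :
    (petQ p₁ p d).eval x = p.eval (x + d) - p.eval d - p₁.eval x := by
  simp [petQ, taylor_eval]

open Polynomial in
/-- The reduced system. -/
noncomputable def petNext (p₁ : ℤ[X]) (A : Finset ℤ[X]) (V : Finset ℤ) : Finset ℤ[X] :=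
  (Finset.image₂ (petQ p₁) A (insert 0 V)).erase 0

open Polynomial in
theorem petQ_high (p₁ p : ℤ[X]) (d : ℤ) (h : p₁.natDegree < p.natDegree) :
    (petQ p₁ p d).natDegree = p.natDegree ∧ (petQ p₁ p d).leadingCoeff = p.leadingCoeff := by
  have h1 : petQ p₁ p d = taylor d p - (C (p.eval d) + p₁) := by unfold petQ; ring
  have h2 : (C (p.eval d) + p₁).natDegree < (taylor d p).natDegree := by
    rw [natDegree_taylor, natDegree_C_add]; exact h
  have h3 : (petQ p₁ p d).natDegree = p.natDegree := by
    rw [h1, natDegree_sub_eq_left_of_natDegree_lt h2, natDegree_taylor]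
  refine ⟨h3, ?_⟩
  rw [h1, leadingCoeff_sub_of_degree_lt (degree_lt_degree h2)]
  simp

open Polynomial in
theorem petQ_low (p₁ p : ℤ[X]) (d : ℤ) (h : p.natDegree ≤ p₁.natDegree) :
    (petQ p₁ p d).natDegree ≤ p₁.natDegree := by
  unfold petQ
  refine (natDegree_sub_le _ _).trans (max_le ?_ le_rfl)
  refine (natDegree_sub_le _ _).trans (max_le ?_ ?_)
  · rwa [natDegree_taylor]
  · simp

open Polynomial in
theorem petNext_lt (p₁ : ℤ[X]) (A : Finset ℤ[X]) (V : Finset ℤ) (hp₁ : p₁ ∈ A)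
    (hD : 1 ≤ p₁.natDegree) (hmin : ∀ p ∈ A, p₁.natDegree ≤ p.natDegree) :
    ∃ i, (∀ j, i < j → petWeight (petNext p₁ A V) j = petWeight A j) ∧
      petWeight (petNext p₁ A V) i < petWeight A i := by
  refine ⟨p₁.natDegree, ?_, ?_⟩
  · intro j hj
    simp only [petWeight, Finsupp.onFinset_apply]
    congr 1
    ext c
    simp only [Finset.mem_image, Finset.mem_filter, petNext, Finset.mem_erase, Finset.mem_image₂]
    constructor
    · rintro ⟨q, ⟨⟨hq0, p, hp, d, hd, rfl⟩, hq⟩, rfl⟩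
      by_cases h : p₁.natDegree < p.natDegree
      · obtain ⟨h1, h2⟩ := petQ_high p₁ p d h
        exact ⟨p, ⟨hp, by omega⟩, h2.symm⟩
      · have := petQ_low p₁ p d (by omega)
        omega
    · rintro ⟨p, ⟨hp, hpj⟩, rfl⟩
      obtain ⟨h1, h2⟩ := petQ_high p₁ p 0 (by omega)
      refine ⟨petQ p₁ p 0, ⟨⟨?_, p, hp, 0, by simp, rfl⟩, by omega⟩, h2⟩
      intro h0
      rw [h0] at h1
      simp at h1
      omega
  · simp only [petWeight, Finsupp.onFinset_apply]
    set I := (A.filter (fun p => p.natDegree = p₁.natDegree)).image leadingCoeff with hI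
    have hmem : p₁.leadingCoeff ∈ I := by
      rw [hI]; exact Finset.mem_image_of_mem _ (by simp [hp₁])
    have hlt : (I.erase p₁.leadingCoeff).card < I.card := Finset.card_erase_lt_of_mem hmem
    refine lt_of_le_of_lt ?_ hlt
    refine le_trans (Finset.card_le_card (t := (I.erase p₁.leadingCoeff).image
      (fun c => c - p₁.leadingCoeff)) ?_) Finset.card_image_le
    intro c hc
    simp only [Finset.mem_image, Finset.mem_filter, petNext, Finset.mem_erase,
      Finset.mem_image₂] at hc
    obtain ⟨q, ⟨⟨hq0, p, hp, d, hd, rfl⟩, hq⟩, rfl⟩ := hc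
    have hpd : p.natDegree = p₁.natDegree := by
      by_contra hne
      have := petQ_high p₁ p d (lt_of_le_of_ne (hmin p hp) (Ne.symm hne))
      omega
    have hlc : (petQ p₁ p d).leadingCoeff = p.leadingCoeff - p₁.leadingCoeff := by
      have e1 : (taylor d p).coeff p₁.natDegree = p.leadingCoeff := by
        rw [← hpd, ← natDegree_taylor p d]
        simpa only [leadingCoeff] using (leadingCoeff_taylor (r := d) (f := p))
      have e2 : (C (p.eval d)).coeff p₁.natDegree = 0 := by
        rw [coeff_C, if_neg (by omega)]
      rw [leadingCoeff, hq]
      simp only [petQ, coeff_sub, e1, e2, sub_zero]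
      rfl
    rw [Finset.mem_image]
    refine ⟨p.leadingCoeff, ?_, hlc.symm⟩
    rw [Finset.mem_erase]
    refine ⟨?_, ?_⟩
    · intro h
      rw [h, sub_self, leadingCoeff_eq_zero] at hlc
      exact hq0 hlc
    · rw [hI]; exact Finset.mem_image_of_mem _ (by simp [hp, hpd])

open Polynomial in
/-- Polynomial van der Waerden conclusion for a system. -/
def PetGood (A : Finset ℤ[X]) : Prop :=
  ∀ (κ : Type) [Finite κ], ∃ U V : Finset ℤ, (∀ d ∈ V, 1 ≤ d) ∧
    ∀ χ : ℤ → κ, ∃ a ∈ U, ∃ d ∈ V, ∀ p ∈ A, χ (a + p.eval d) = χ a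

open Polynomial in
theorem pet_focus (A : Finset ℤ[X]) (hA : ∀ p ∈ A, p.eval 0 = 0) (p₁ : ℤ[X])
    (ih : ∀ V, PetGood (petNext p₁ A V)) (κ : Type) [Finite κ] (r : ℕ) :
    ∃ U V : Finset ℤ, (∀ d ∈ V, 1 ≤ d) ∧ ∀ χ : ℤ → κ,
      (∃ a ∈ U, ∃ d ∈ V, ∀ p ∈ A, χ (a + p.eval d) = χ a) ∨
      (∃ a ∈ U, ∃ K : Finset κ, K.card = r ∧
        ∀ c ∈ K, ∃ d ∈ V, ∀ p ∈ A, χ (a + p.eval d) = c) := by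
  classical
  induction r with
  | zero =>
    refine ⟨{0}, ∅, by simp, fun χ => Or.inr ⟨0, by simp, ∅, by simp, by simp⟩⟩
  | succ r ihr =>
    obtain ⟨U, V, hV, hUV⟩ := ihr
    set T : Finset ℤ := U ∪ Finset.image₂ (fun a (x : ℤ[X] × ℤ) => a + x.1.eval x.2) U (A ×ˢ V)
      with hT
    obtain ⟨U', V', hV', hUV'⟩ := ih V (T → κ)
    refine ⟨Finset.image₂ (· + ·) U' U ∪
      Finset.image₂ (fun x e => x - p₁.eval e) (Finset.image₂ (· + ·) U' U) V',
      V ∪ V' ∪ Finset.image₂ (· + ·) V V', ?_, ?_⟩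
    · intro d hd
      simp only [Finset.mem_union, Finset.mem_image₂] at hd
      rcases hd with (hd | hd) | ⟨x, hx, y, hy, rfl⟩
      · exact hV d hd
      · exact hV' d hd
      · have := hV x hx; have := hV' y hy; omega
    · intro χ
      obtain ⟨a', ha', e, he, hq⟩ := hUV' (fun x t => χ (x + t))
      have key : ∀ p ∈ A, ∀ d ∈ insert 0 V, ∀ t ∈ T,
          χ (a' + (p.eval (e + d) - p.eval d - p₁.eval e) + t) = χ (a' + t) := by
        intro p hp d hd t ht
        rw [← petQ_eval]
        by_cases h0 : petQ p₁ p d = 0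
        · simp [h0]
        · have := hq (petQ p₁ p d) (Finset.mem_erase.2 ⟨h0, Finset.mem_image₂_of_mem hp hd⟩)
          exact congrFun this ⟨t, ht⟩
      rcases hUV (fun y => χ (a' + y)) with ⟨a, ha, d, hd, h⟩ | ⟨a, ha, K, hK, h⟩
      · left
        refine ⟨a' + a, Finset.mem_union_left _ (Finset.mem_image₂_of_mem ha' ha), d, by simp [hd], ?_⟩
        intro p hp
        rw [add_assoc]; exact h p hp
      · by_cases hc : χ (a' + a) ∈ K
        · left
          obtain ⟨d, hd, hh⟩ := h _ hc
          refine ⟨a' + a, Finset.mem_union_left _ (Finset.mem_image₂_of_mem ha' ha), d,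
            by simp [hd], ?_⟩
          intro p hp
          rw [add_assoc]; exact hh p hp
        · right
          refine ⟨a' + a - p₁.eval e, Finset.mem_union_right _
            (Finset.mem_image₂_of_mem (f := fun x e => x - p₁.eval e)
              (Finset.mem_image₂_of_mem ha' ha) he), insert (χ (a' + a)) K, ?_, ?_⟩
          · rw [Finset.card_insert_of_notMem hc, hK]
          · intro c hcK
            rcases Finset.mem_insert.1 hcK with rfl | hcK
            · refine ⟨e, by simp [he], ?_⟩
              intro p hp
              have := key p hp 0 (by simp) a (Finset.mem_union_left _ ha)
              rw [← this, hA p hp]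
              congr 1
              rw [add_zero]; ring
            · obtain ⟨d, hd, hh⟩ := h c hcK
              refine ⟨d + e, Finset.mem_union_right _ (Finset.mem_image₂_of_mem hd he), ?_⟩
              intro p hp
              rw [← hh p hp]
              have := key p hp d (by simp [hd]) (a + p.eval d) (Finset.mem_union_right _
                (Finset.mem_image₂_of_mem (f := fun a (x : ℤ[X] × ℤ) => a + x.1.eval x.2) ha
                  (b := (p, d)) (Finset.mk_mem_product hp hd)))
              rw [← this]
              congr 1
              rw [add_comm d e]; ring

open Polynomial in
theorem pet_main (A : Finset ℤ[X]) : (∀ p ∈ A, p ≠ 0 ∧ p.eval 0 = 0) → PetGood A := by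
  induction A using (InvImage.wf petWeight petWeight_wf).induction with
  | _ A IH =>
  intro hA
  rcases A.eq_empty_or_nonempty with rfl | hne
  · intro κ _
    exact ⟨{0}, {1}, by simp, fun χ => ⟨0, by simp, 1, by simp, by simp⟩⟩
  obtain ⟨p₁, hp₁, hmin⟩ := A.exists_min_image natDegree hne
  have hD : 1 ≤ p₁.natDegree := by
    by_contra h
    have h0 : p₁.natDegree = 0 := by omega
    rw [natDegree_eq_zero] at h0
    obtain ⟨c, rfl⟩ := h0
    obtain ⟨h1, h2⟩ := hA _ hp₁
    simp at h2
    simp [h2] at h1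
  have ih : ∀ V, PetGood (petNext p₁ A V) := by
    intro V
    refine IH _ (petNext_lt p₁ A V hp₁ hD hmin) ?_
    intro q hq
    obtain ⟨h0, hq⟩ := Finset.mem_erase.1 hq
    obtain ⟨p, hp, d, hd, rfl⟩ := Finset.mem_image₂.1 hq
    refine ⟨h0, ?_⟩
    rw [petQ_eval, (hA p₁ hp₁).2]
    simp
  intro κ _
  obtain ⟨U, V, hV, h⟩ := pet_focus A (fun p hp => (hA p hp).2) p₁ ih κ (Nat.card κ + 1)
  refine ⟨U, V, hV, fun χ => ?_⟩
  rcases h χ with h | ⟨a, ha, K, hK, -⟩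
  · exact h
  · have := Fintype.ofFinite κ
    have h1 := K.card_le_univ
    rw [Nat.card_eq_fintype_card] at hK
    omega

open Polynomial in
theorem pet_eventually_pos (P : ℤ[X]) (hdeg : 1 ≤ P.natDegree) (hlead : 0 < P.leadingCoeff) :
    ∃ M : ℤ, 1 ≤ M ∧ ∀ x, M ≤ x → 0 < P.eval x := by
  have hinj : Function.Injective (Int.castRingHom ℝ) := Int.cast_injective
  have h := (P.map (Int.castRingHom ℝ)).tendsto_atTop_of_leadingCoeff_nonneg
    (by rw [degree_map_eq_of_injective hinj]; exact natDegree_pos_iff_degree_pos.1 hdeg)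
    (by rw [leadingCoeff_map_of_injective hinj]; simpa using hlead.le)
  have h2 := (h.comp tendsto_intCast_atTop_atTop).eventually_gt_atTop 0
  obtain ⟨M, hM⟩ := Filter.eventually_atTop.1 h2
  refine ⟨max M 1, le_max_right _ _, fun x hx => ?_⟩
  have := hM x ((le_max_left _ _).trans hx)
  simp only [Function.comp, eval_intCast_map] at this
  simpa using this

/-- If `P` is a nonconstant integer polynomial with positive leading coefficient and
`P(0) = 0`, and `S ⊆ ℤ⁺` contains all positive values taken by `P` on `ℤ`, then `S`
is a ladder. -/
theorem ladder_of_superset_polynomial_values (P : Polynomial ℤ)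
    (hdeg : 1 ≤ P.natDegree) (hlead : 0 < P.leadingCoeff) (hzero : P.eval 0 = 0)
    (S : Set ℤ) (hS : ∀ s ∈ S, 0 < s)
    (hsub : {y : ℤ | 0 < y ∧ ∃ x : ℤ, P.eval x = y} ⊆ S) :
    IsLadder S := by
  intro k _ χ L
  obtain ⟨M, hM1, hM⟩ := pet_eventually_pos P hdeg hlead
  set Q : ℕ → Polynomial ℤ := fun i =>
    Polynomial.C (i : ℤ) * P.comp (Polynomial.C M * Polynomial.X) with hQ
  have hQe : ∀ i x, (Q i).eval x = (i : ℤ) * P.eval (M * x) := by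
    intro i x; simp [hQ]
  obtain ⟨U, V, hV, h⟩ := pet_main (((Finset.range L).image Q).erase 0) (by
    intro p hp
    obtain ⟨h0, hp⟩ := Finset.mem_erase.1 hp
    obtain ⟨i, hi, rfl⟩ := Finset.mem_image.1 hp
    refine ⟨h0, ?_⟩
    rw [hQe, mul_zero, hzero, mul_zero]) (Fin k)
  obtain ⟨a, ha, d, hd, hh⟩ := h χ
  have hd1 := hV d hd
  refine ⟨a, P.eval (M * d), hsub ⟨hM _ (by nlinarith), M * d, rfl⟩, ?_⟩
  intro i hi
  rw [← hQe]
  by_cases h0 : Q i = 0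
  · simp [h0]
  · exact hh _ (Finset.mem_erase.2 ⟨h0, Finset.mem_image_of_mem _ (Finset.mem_range.2 hi)⟩)
end

section
/- If a set S ⊆ ℤ⁺ contains combinatorial cubes of arbitrarily large dimension (i.e., for every k there is a multiset of k positive integers all of whose nonempty subset sums lie in S), then S is a ladder. -/
/-- If `S ⊆ ℤ⁺` contains combinatorial cubes of arbitrarily large dimension (for each
`k`, a multiset of `k` positive integers all of whose nonempty subset sums lie in `S`),
then `S` is a ladder. -/
theorem ladder_of_arbitrarily_large_combinatorial_cubes (S : Set ℤ)
    (hS : ∀ s ∈ S, 0 < s)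
    (hcubes : ∀ k : ℕ, ∃ a : Fin k → ℤ, (∀ i, 0 < a i) ∧
      ∀ I : Finset (Fin k), I.Nonempty → (∑ i ∈ I, a i) ∈ S) :
    IsLadder S := by
  intro k _ χ L
  classical
  obtain ⟨n, hn⟩ :=
    Combinatorics.Subspace.exists_mono_in_high_dimension_fin (Fin (L + 1)) (Fin k) Unit
  obtain ⟨a, _, ha⟩ := hcubes n
  obtain ⟨l, c, hl⟩ := hn fun v => χ (∑ j, ((v j : ℕ) : ℤ) * a j)
  have key : ∀ i : Fin (L + 1), ∑ j, ((l (fun _ => i) j : ℕ) : ℤ) * a j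
      = ∑ j, ((l (fun _ => 0) j : ℕ) : ℤ) * a j
        + ((i : ℕ) : ℤ) * ∑ j ∈ Finset.univ.filter (fun j => l.idxFun j = Sum.inr ()), a j := by
    intro i
    rw [Finset.sum_filter, Finset.mul_sum, ← Finset.sum_add_distrib]
    refine Finset.sum_congr rfl fun j _ => ?_
    cases h : l.idxFun j <;> simp [Combinatorics.Subspace.apply_def, h]
  refine ⟨∑ j, ((l (fun _ => 0) j : ℕ) : ℤ) * a j, _,
    ha (Finset.univ.filter (fun j => l.idxFun j = Sum.inr ())) ?_, ?_⟩
  · obtain ⟨j, hj⟩ := l.proper ()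
    exact ⟨j, by simp [hj]⟩
  · intro i hi
    have h1 := hl (fun _ => ⟨i, by omega⟩)
    have h0 := hl (fun _ => 0)
    simp only [key ⟨i, by omega⟩] at h1
    exact h1.trans h0.symm
end

section
/- There exists a set S ⊆ ℤ⁺ such that both S and its complement ℤ⁺ \ S are ladders. (For instance, S = {4n² : n ∈ ℤ⁺} is a ladder whose complement contains the ladder {2n² : n ∈ ℤ⁺}.) -/
theorem ladder_of_blocks (S : Set ℤ)
    (h : ∀ W : ℕ, ∃ M : ℕ, ∀ w : ℕ, 1 ≤ w → w ≤ W → ((M * w : ℕ) : ℤ) ∈ S) : IsLadder S := by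
  classical
  intro k hk χ L
  obtain ⟨ι, hι, H⟩ := Combinatorics.Line.exists_mono_in_high_dimension (Fin (L + 1)) (Fin k)
  obtain ⟨M, hM⟩ := h (Fintype.card ι)
  obtain ⟨l, c, hl⟩ := H (fun v => χ (∑ i, (M : ℤ) * ((v i : ℕ) : ℤ)))
  set A : Finset ι := Finset.univ.filter (fun i => l.idxFun i = none) with hA
  have hpos : 1 ≤ A.card := by
    obtain ⟨i, hi⟩ := l.proper
    exact Finset.card_pos.mpr ⟨i, by simp [hA, hi]⟩
  refine ⟨∑ i, (M : ℤ) * ((l 0 i : ℕ) : ℤ), _, hM A.card hpos (Finset.card_le_univ A), ?_⟩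
  intro j hj
  have h1 := hl ⟨j, by omega⟩
  have h0 := hl 0
  simp only at h1 h0
  rw [h0, ← h1]
  congr 1
  have : (A.card : ℤ) = ∑ i, if l.idxFun i = none then (1 : ℤ) else 0 := by
    simp [hA]
  push_cast
  rw [this, Finset.mul_sum, Finset.mul_sum, ← Finset.sum_add_distrib]
  refine Finset.sum_congr rfl fun i _ => ?_
  rcases hi : l.idxFun i with _ | b
  · simp [hi]; ring
  · simp [hi]

theorem log_block (n W w : ℕ) (hn : W ≤ n) (h1 : 1 ≤ w) (h2 : w ≤ W) :
    Nat.log 2 (Nat.log 2 (2 ^ 2 ^ n * w)) = n := by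
  have hw : Nat.log 2 w < 2 ^ n :=
    lt_of_le_of_lt (Nat.log_le_self 2 w) (lt_of_le_of_lt (h2.trans hn) Nat.lt_two_pow_self)
  have e : Nat.log 2 (2 ^ 2 ^ n * w) = 2 ^ n + Nat.log 2 w := by
    apply Nat.log_eq_of_pow_le_of_lt_pow
    · rw [pow_add]
      exact Nat.mul_le_mul_left _ (Nat.pow_log_le_self 2 (by omega))
    · rw [add_assoc, pow_add]
      exact Nat.mul_lt_mul_of_pos_left (Nat.lt_pow_succ_log_self (by norm_num) w) (by positivity)
  rw [e]
  apply Nat.log_eq_of_pow_le_of_lt_pow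
  · omega
  · rw [pow_succ]; omega

/-- There exists a set `S ⊆ ℤ⁺` such that both `S` and its complement within `ℤ⁺`
are ladders. -/
theorem exists_ladder_with_ladder_complement :
    ∃ S : Set ℤ, S ⊆ {x : ℤ | 0 < x} ∧ IsLadder S ∧
      IsLadder ({x : ℤ | 0 < x} \ S) := by
  refine ⟨{x : ℤ | 0 < x ∧ Nat.log 2 (Nat.log 2 x.toNat) % 2 = 0}, fun x hx => hx.1,
    ladder_of_blocks _ fun W => ⟨2 ^ 2 ^ (2 * W), fun w h1 h2 => ?_⟩,
    ladder_of_blocks _ fun W => ⟨2 ^ 2 ^ (2 * W + 1), fun w h1 h2 => ?_⟩⟩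
  · refine ⟨Int.natCast_pos.mpr (Nat.mul_pos (by positivity) h1), ?_⟩
    rw [Int.toNat_natCast, log_block _ W w (by omega) h1 h2]
    omega
  · refine ⟨Int.natCast_pos.mpr (Nat.mul_pos (by positivity) h1), fun hx => ?_⟩
    have := hx.2
    rw [Int.toNat_natCast, log_block _ W w (by omega) h1 h2] at this
    omega
end

section
/- There exists a ladder S ⊆ ℤ⁺ such that for every nonconstant polynomial P with integer coefficients for which P(ℤ) ∩ ℤ⁺ is infinite, S does not contain all of P(ℤ) ∩ ℤ⁺ (i.e., some positive value of P lies outside S). -/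
open Polynomial Filter Topology in
lemma poly_cast_eval (P : ℤ[X]) (n : ℕ) :
    ((P.map (Int.castRingHom ℝ)).eval (n : ℝ)) = ((P.eval (n : ℤ) : ℤ) : ℝ) := by
  simp

open Polynomial Filter Topology in
lemma poly_neg (P : ℤ[X]) (hd : 0 < P.natDegree) (hl : P.leadingCoeff ≤ 0) :
    ∃ N : ℕ, ∀ n : ℕ, N ≤ n → P.eval (n : ℤ) < 0 := by
  have hinj : Function.Injective (Int.castRingHom ℝ) := Int.cast_injective
  have h := (P.map (Int.castRingHom ℝ)).tendsto_atBot_of_leadingCoeff_nonpos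
    (by rw [degree_map_eq_of_injective hinj]; exact natDegree_pos_iff_degree_pos.1 hd)
    (by rw [leadingCoeff_map_of_injective hinj]; simpa using hl)
  have h2 := (h.comp (tendsto_natCast_atTop_atTop (R := ℝ))).eventually_lt_atBot 0
  obtain ⟨N, hN⟩ := eventually_atTop.1 h2
  refine ⟨N, fun n hn => ?_⟩
  have := hN n hn
  simp only [Function.comp, poly_cast_eval] at this
  exact_mod_cast this

open Polynomial Filter Topology in
lemma poly_pos (P : ℤ[X]) (hd : 0 < P.natDegree) (hl : 0 < P.leadingCoeff) :
    (∃ N : ℕ, ∀ n : ℕ, N ≤ n → 0 < P.eval (n : ℤ) ∧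
      P.eval ((n + 1 : ℕ) : ℤ) ≤ 2 * P.eval (n : ℤ)) ∧
    (∀ B : ℤ, ∃ N : ℕ, ∀ n : ℕ, N ≤ n → B < P.eval (n : ℤ)) := by
  have hinj : Function.Injective (Int.castRingHom ℝ) := Int.cast_injective
  have hdR : 0 < (P.map (Int.castRingHom ℝ)).degree := by
    rw [degree_map_eq_of_injective hinj]; exact natDegree_pos_iff_degree_pos.1 hd
  have hlR : 0 < (P.map (Int.castRingHom ℝ)).leadingCoeff := by
    rw [leadingCoeff_map_of_injective hinj]; simpa using hl
  have h := (P.map (Int.castRingHom ℝ)).tendsto_atTop_of_leadingCoeff_nonneg hdR hlR.le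
  have h2 : ∀ B : ℤ, ∃ N : ℕ, ∀ n : ℕ, N ≤ n → B < P.eval (n : ℤ) := by
    intro B
    have h2 := (h.comp (tendsto_natCast_atTop_atTop (R := ℝ))).eventually_gt_atTop (B : ℝ)
    obtain ⟨N, hN⟩ := eventually_atTop.1 h2
    refine ⟨N, fun n hn => ?_⟩
    have := hN n hn
    simp only [Function.comp, poly_cast_eval] at this
    exact_mod_cast this
  refine ⟨?_, h2⟩
  obtain ⟨N, hN⟩ := h2 0
  set Q := P.map (Int.castRingHom ℝ) with hQ
  have hnd : (Q.comp (X + C 1)).natDegree = Q.natDegree := by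
    rw [natDegree_comp, natDegree_X_add_C, mul_one]
  have hlc : (Q.comp (X + C 1)).leadingCoeff = Q.leadingCoeff := by
    rw [leadingCoeff_comp (by rw [natDegree_X_add_C]; exact one_ne_zero), leadingCoeff_X_add_C]
    simp
  have hQ0 : Q ≠ 0 := fun h0 => by simp [h0] at hlR
  have hQ1 : Q.comp (X + C 1) ≠ 0 := by
    rw [← leadingCoeff_ne_zero, hlc]; exact hlR.ne'
  have ht := div_tendsto_atTop_leadingCoeff_div_of_degree_eq (Q.comp (X + C 1)) Q
    (by rw [degree_eq_natDegree hQ0, degree_eq_natDegree hQ1, hnd])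
  rw [hlc, div_self hlR.ne'] at ht
  have h3 := (ht.comp (tendsto_natCast_atTop_atTop (R := ℝ))).eventually_lt_const
    (show (1 : ℝ) < 2 by norm_num)
  obtain ⟨M, hM⟩ := eventually_atTop.1 h3
  refine ⟨max N M, fun n hn => ?_⟩
  have hp := hN n (le_trans (le_max_left _ _) hn)
  refine ⟨hp, ?_⟩
  have := hM n (le_trans (le_max_right _ _) hn)
  have e : Q.eval ((n : ℝ) + 1) = ((P.eval ((n + 1 : ℕ) : ℤ) : ℤ) : ℝ) := by
    rw [← poly_cast_eval]; push_cast; rfl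
  simp only [Function.comp, eval_comp, eval_add, eval_X, eval_C] at this
  rw [e, hQ, poly_cast_eval, div_lt_iff₀ (by exact_mod_cast hp)] at this
  exact_mod_cast this.le

/-- The scales. -/
def scaleD (n : ℕ) : ℤ := 4 ^ n * (n.factorial : ℤ)

/-- The sparse ladder. -/
def sparseLadder : Set ℤ := {x | ∃ n j : ℕ, 1 ≤ j ∧ j ≤ n ∧ x = j * scaleD n}

lemma scaleD_pos (n : ℕ) : 0 < scaleD n := by unfold scaleD; positivity

lemma scaleD_succ (n : ℕ) : scaleD (n + 1) = 4 * (n + 1) * scaleD n := by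
  unfold scaleD; rw [Nat.factorial_succ]; push_cast; ring

lemma scaleD_mono : Monotone scaleD := by
  refine monotone_nat_of_le_succ fun n => ?_
  rw [scaleD_succ]; have := scaleD_pos n; nlinarith

lemma le_scaleD (n : ℕ) : (n : ℤ) ≤ scaleD n := by
  induction n with
  | zero => exact (scaleD_pos 0).le
  | succ n ih => rw [scaleD_succ]; have := scaleD_pos n; push_cast; nlinarith

lemma not_mem_sparse (n : ℕ) (x : ℤ) (h1 : n * scaleD n < x) (h2 : x < scaleD (n + 1)) :
    x ∉ sparseLadder := by
  rintro ⟨k, j, hj, hjk, rfl⟩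
  have hk := scaleD_pos k
  rcases le_or_gt k n with h | h
  · have := scaleD_mono h
    have : (j : ℤ) * scaleD k ≤ n * scaleD n := by
      have : (j : ℤ) ≤ n := by exact_mod_cast hjk.trans h
      gcongr
    omega
  · have := scaleD_mono (Nat.succ_le_of_lt h)
    have hj' : (1 : ℤ) ≤ j := by exact_mod_cast hj
    simp only [Nat.succ_eq_add_one] at this
    nlinarith

open Polynomial in
lemma poly_omits (P : ℤ[X]) (hd : 0 < P.natDegree) (hl : 0 < P.leadingCoeff) :
    ∃ x : ℤ, 0 < P.eval x ∧ P.eval x ∉ sparseLadder := by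
  obtain ⟨⟨N, hN⟩, hB⟩ := poly_pos P hd hl
  obtain ⟨n, hn1, hn⟩ : ∃ n : ℕ, 1 ≤ n ∧ P.eval (N : ℤ) ≤ n * scaleD n := by
    refine ⟨(P.eval (N : ℤ)).toNat + 1, by omega, ?_⟩
    have h1 := le_scaleD ((P.eval (N : ℤ)).toNat + 1)
    have h2 := scaleD_pos ((P.eval (N : ℤ)).toNat + 1)
    push_cast at *
    have := Int.self_le_toNat (P.eval (N : ℤ))
    nlinarith
  have hex : ∃ m : ℕ, n * scaleD n < P.eval ((N + m : ℕ) : ℤ) := by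
    obtain ⟨M, hM⟩ := hB (n * scaleD n)
    exact ⟨M, hM _ (by omega)⟩
  classical
  obtain ⟨m, hm⟩ : ∃ m, Nat.find hex = m := ⟨_, rfl⟩
  have hs := Nat.find_spec hex
  rw [hm] at hs
  refine ⟨((N + m : ℕ) : ℤ), (hN _ (by omega)).1, not_mem_sparse n _ hs ?_⟩
  cases m with
  | zero => simp at hs; omega
  | succ k =>
    have hk := Nat.find_min hex (m := k) (by omega)
    have h2 := (hN (N + k) (by omega)).2
    rw [← add_assoc]
    rw [scaleD_succ]
    have := scaleD_pos n
    nlinarith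

lemma sparse_isLadder : IsLadder sparseLadder := by
  intro k hk χ L
  classical
  obtain ⟨ι, _, hι⟩ := Combinatorics.Line.exists_mono_in_high_dimension (Fin (L + 1)) (Fin k)
  set D := scaleD (Fintype.card ι) with hD
  obtain ⟨l, c, hl⟩ := hι fun v => χ (∑ i, ((v i : ℕ) : ℤ) * D)
  set s : Finset ι := Finset.univ.filter (fun i => l.idxFun i = none) with hs
  have key : ∀ x : Fin (L + 1), ∑ i, ((l x i : ℕ) : ℤ) * D
      = ∑ i, ((l 0 i : ℕ) : ℤ) * D + ((x : ℕ) : ℤ) * (s.card * D) := by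
    intro x
    have : ((x : ℕ) : ℤ) * (s.card * D) = ∑ i, if l.idxFun i = none then ((x : ℕ) : ℤ) * D else 0 := by
      rw [← Finset.sum_filter, Finset.sum_const, nsmul_eq_mul]; ring
    rw [this, ← Finset.sum_add_distrib]
    refine Finset.sum_congr rfl fun i _ => ?_
    cases h : l.idxFun i with
    | none => simp [h]
    | some y => simp [h]
  refine ⟨∑ i, ((l 0 i : ℕ) : ℤ) * D, s.card * D, ⟨Fintype.card ι, s.card, ?_, ?_, rfl⟩, ?_⟩
  · obtain ⟨i, hi⟩ := l.proper
    exact Finset.card_pos.mpr ⟨i, by simp [hs, hi]⟩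
  · exact Finset.card_le_univ s
  · intro i hi
    have h1 := key ⟨i, by omega⟩
    simp only at h1
    rw [← h1]
    exact (hl _).trans (hl 0).symm

/-- There is a ladder `S ⊆ ℤ⁺` which, for every nonconstant integer polynomial `P`
whose set of positive values is infinite, omits some positive value of `P`. -/
theorem exists_ladder_omitting_polynomial_values :
    ∃ S : Set ℤ, S ⊆ {x : ℤ | 0 < x} ∧ IsLadder S ∧
      ∀ P : Polynomial ℤ, 0 < P.natDegree →
        {y : ℤ | 0 < y ∧ ∃ x : ℤ, P.eval x = y}.Infinite →
        ∃ y : ℤ, 0 < y ∧ (∃ x : ℤ, P.eval x = y) ∧ y ∉ S := by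
  refine ⟨sparseLadder, ?_, sparse_isLadder, ?_⟩
  · rintro x ⟨n, j, hj, -, rfl⟩
    have := scaleD_pos n
    have : (0 : ℤ) < j := by exact_mod_cast hj
    simp only [Set.mem_ofPred_eq]
    positivity
  intro P hd hinf
  have hd' : 0 < (P.comp (-Polynomial.X)).natDegree := by
    rw [Polynomial.natDegree_comp, Polynomial.natDegree_neg, Polynomial.natDegree_X]; omega
  rcases lt_or_ge 0 P.leadingCoeff with hl | hl
  · obtain ⟨x, h1, h2⟩ := poly_omits P hd hl
    exact ⟨_, h1, ⟨x, rfl⟩, h2⟩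
  rcases lt_or_ge 0 (P.comp (-Polynomial.X)).leadingCoeff with hl' | hl'
  · obtain ⟨x, h1, h2⟩ := poly_omits _ hd' hl'
    simp only [Polynomial.eval_comp, Polynomial.eval_neg, Polynomial.eval_X] at h1 h2
    exact ⟨_, h1, ⟨-x, rfl⟩, h2⟩
  exfalso
  obtain ⟨N, hN⟩ := poly_neg P hd hl
  obtain ⟨M, hM⟩ := poly_neg _ hd' hl'
  refine hinf (((Set.finite_Icc (-(M : ℤ)) N).image (fun x => P.eval x)).subset ?_)
  rintro y ⟨hy, x, rfl⟩
  refine ⟨x, ⟨?_, ?_⟩, rfl⟩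
  · by_contra hc
    have := hM (-x).toNat (by omega)
    simp only [Polynomial.eval_comp, Polynomial.eval_neg, Polynomial.eval_X] at this
    rw [show -((-x).toNat : ℤ) = x by omega] at this
    omega
  · by_contra hc
    have := hN x.toNat (by omega)
    rw [show (x.toNat : ℤ) = x by omega] at this
    omega
end

section
/- Any set S ⊆ ℤ⁺ with upper density 1 is a ladder. -/
/-- `S` has upper density one: `limsup_{n→∞} |S ∩ {1,…,n}| / n = 1`. -/
def HasUpperDensityOne (S : Set ℤ) : Prop :=
  Filter.atTop.limsup (fun n : ℕ => ((S ∩ Set.Icc (1 : ℤ) (n : ℤ)).ncard : ℝ) / n) = 1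

/-- A set of upper density one contains `x, 2x, …, Mx` for some `x`. -/
lemma exists_dilate (S : Set ℤ) (hdens : HasUpperDensityOne S) (M : ℕ) (hM : 1 ≤ M) :
    ∃ x : ℤ, ∀ j : ℕ, 1 ≤ j → j ≤ M → (j : ℤ) * x ∈ S := by
  classical
  by_contra hcon
  push Not at hcon
  have hMR : (1 : ℝ) ≤ M := by exact_mod_cast hM
  have hfreq : ∃ᶠ n : ℕ in Filter.atTop,
      1 - 1 / (2 * (M : ℝ) ^ 2) < ((S ∩ Set.Icc (1 : ℤ) (n : ℤ)).ncard : ℝ) / n := by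
    apply Filter.frequently_lt_of_lt_limsup
    · apply Filter.IsBoundedUnder.isCoboundedUnder_le
      exact Filter.isBoundedUnder_of ⟨0, fun n => div_nonneg (Nat.cast_nonneg _) (Nat.cast_nonneg _)⟩
    · unfold HasUpperDensityOne at hdens
      rw [hdens]
      have : 0 < 1 / (2 * (M : ℝ) ^ 2) := by positivity
      linarith
  obtain ⟨n, hn, hlt⟩ := Filter.frequently_atTop.1 hfreq (2 * M)
  set G := (Finset.Icc (1 : ℤ) n).filter (· ∈ S) with hG
  set B := (Finset.Icc (1 : ℤ) n).filter (· ∉ S) with hB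
  have hGc : (S ∩ Set.Icc (1 : ℤ) (n : ℤ)).ncard = G.card := by
    rw [← Set.ncard_coe_finset]
    congr 1
    ext y
    simp only [hG, Set.mem_inter_iff, Set.mem_Icc, Finset.coe_filter, Finset.mem_Icc, Set.mem_ofPred_eq]
    tauto
  have hsum : G.card + B.card = n := by
    rw [hG, hB, Finset.card_filter_add_card_filter_not]
    simp
  have hnpos : (0 : ℝ) < n := by
    have : 0 < n := by omega
    exact_mod_cast this
  rw [hGc, lt_div_iff₀ hnpos] at hlt
  have hsumR : (G.card : ℝ) + B.card = n := by exact_mod_cast hsum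
  have hBc : 2 * (M : ℝ) ^ 2 * B.card < n := by
    have h1 : (B.card : ℝ) < 1 / (2 * (M : ℝ) ^ 2) * n := by linarith
    have h2 : (0 : ℝ) < 2 * (M : ℝ) ^ 2 := by positivity
    rw [one_div, inv_mul_eq_div, lt_div_iff₀ h2] at h1
    linarith
  have hBN : 2 * M ^ 2 * B.card < n := by exact_mod_cast hBc
  have hcover : Finset.Icc (1 : ℤ) ((n / M : ℕ) : ℤ) ⊆ (Finset.Icc 1 M).biUnion
      (fun j : ℕ => (B.image (fun b : ℤ => b / (j : ℤ)))) := by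
    intro x hx
    rw [Finset.mem_Icc] at hx
    obtain ⟨j, hj1, hj2, hj3⟩ := hcon x
    have hjp : (1 : ℤ) ≤ j := by exact_mod_cast hj1
    have hjM : (j : ℤ) ≤ M := by exact_mod_cast hj2
    have hq : (M : ℤ) * ((n / M : ℕ) : ℤ) ≤ n := by exact_mod_cast Nat.mul_div_le n M
    simp only [Finset.mem_biUnion, Finset.mem_image]
    refine ⟨j, by simp [hj1, hj2], j * x, ?_, ?_⟩
    · rw [hB, Finset.mem_filter, Finset.mem_Icc]
      refine ⟨⟨by nlinarith, ?_⟩, hj3⟩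
      calc (j : ℤ) * x ≤ M * ((n / M : ℕ) : ℤ) := by
            apply mul_le_mul hjM hx.2 (by linarith) (by linarith)
        _ ≤ n := hq
    · exact Int.mul_ediv_cancel_left _ (by omega)
  have hcard := Finset.card_le_card hcover
  have h2 : ((Finset.Icc 1 M).biUnion
      (fun j : ℕ => (B.image (fun b : ℤ => b / (j : ℤ))))).card ≤ (Finset.Icc 1 M).card * B.card :=
    Finset.card_biUnion_le_card_mul _ _ _ fun j _ => Finset.card_image_le
  simp only [Int.card_Icc, Nat.card_Icc, add_sub_cancel_right, Int.toNat_natCast,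
    Nat.add_sub_cancel] at hcard h2
  have h3 : n < M * (n / M + 1) := Nat.lt_mul_div_succ n (by omega)
  have h4 : n / M ≤ M * B.card := hcard.trans h2
  have h5 : M * (n / M) ≤ M * (M * B.card) := Nat.mul_le_mul_left _ h4
  nlinarith

/-- Any set `S ⊆ ℤ⁺` with upper density 1 is a ladder. -/
theorem ladder_of_upper_density_one (S : Set ℤ) (hS : ∀ s ∈ S, 0 < s)
    (hdens : HasUpperDensityOne S) : IsLadder S := by
  classical
  intro k _ χ L
  obtain ⟨ι, hι, hHJ⟩ := Combinatorics.Line.exists_mono_in_high_dimension (Fin (L + 1)) (Fin k)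
  obtain ⟨x, hx⟩ := exists_dilate S hdens (Fintype.card ι + 1) (by omega)
  obtain ⟨l, c, hc⟩ := hHJ (fun v => χ (x * ∑ i, ((v i : ℕ) : ℤ)))
  set A := Finset.univ.filter (fun i => l.idxFun i = none) with hA
  have hApos : 1 ≤ A.card := by
    obtain ⟨i, hi⟩ := l.proper
    exact Finset.card_pos.2 ⟨i, by simp [hA, hi]⟩
  have hAle : A.card ≤ Fintype.card ι + 1 := (Finset.card_le_univ A).trans (by omega)
  have hsum : ∀ j : Fin (L + 1), ∑ i, ((l j i : ℕ) : ℤ)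
      = ∑ i, ((l (0 : Fin (L + 1)) i : ℕ) : ℤ) + (j : ℕ) * A.card := by
    intro j
    have : ((j : ℕ) : ℤ) * A.card = ∑ i, if l.idxFun i = none then ((j : ℕ) : ℤ) else 0 := by
      rw [← Finset.sum_filter, Finset.sum_const, nsmul_eq_mul, mul_comm]
    rw [this, ← Finset.sum_add_distrib]
    refine Finset.sum_congr rfl fun i _ => ?_
    simp only [Combinatorics.Line.apply_def]
    cases h : l.idxFun i <;> simp
  refine ⟨x * ∑ i, ((l (0 : Fin (L + 1)) i : ℕ) : ℤ), A.card * x, hx _ hApos hAle, ?_⟩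
  intro i hi
  have h0 := hc 0
  have h1 := hc ⟨i, by omega⟩
  simp only at h0 h1
  rw [h0, ← h1, hsum ⟨i, by omega⟩]
  congr 1
  ring
end

section
/- Any set S ⊆ ℤ⁺ with upper density 1 contains arbitrarily long sequences of the form {x, 2x, 3x, …, nx}: for every n ∈ ℤ⁺ there exists x ∈ ℤ⁺ such that x, 2x, …, nx all lie in S. -/
/-- Any set `S ⊆ ℤ⁺` with upper density 1 contains, for every `n ≥ 1`, a sequence of
the form `x, 2x, …, nx`. -/
theorem multiples_of_upper_density_one (S : Set ℤ) (hS : ∀ s ∈ S, 0 < s)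
    (hdens : HasUpperDensityOne S) :
    ∀ n : ℕ, 1 ≤ n → ∃ x : ℤ, 0 < x ∧ ∀ m : ℕ, 1 ≤ m → m ≤ n → (m : ℤ) * x ∈ S := by
  classical
  intro n hn
  by_contra! hcon
  have hn0 : (0 : ℝ) < n := by exact_mod_cast hn
  have hlt : 1 - 1 / (2 * (n : ℝ) ^ 2) < Filter.atTop.limsup
      (fun n : ℕ => ((S ∩ Set.Icc (1 : ℤ) (n : ℤ)).ncard : ℝ) / n) := by
    rw [show Filter.atTop.limsup _ = (1 : ℝ) from hdens]
    have : 0 < 1 / (2 * (n : ℝ) ^ 2) := by positivity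
    linarith
  have hfreq := Filter.frequently_lt_of_lt_limsup
    (Filter.isCoboundedUnder_le_of_le (x := (0 : ℝ)) Filter.atTop (fun i => by positivity)) hlt
  obtain ⟨N, hN, hNlt⟩ := (hfreq.and_eventually (Filter.eventually_ge_atTop (2 * n))).exists.imp
    fun N h => And.intro h.2 h.1
  have hN0 : (0 : ℝ) < N := by
    have : 0 < N := by omega
    exact_mod_cast this
  rw [lt_div_iff₀ hN0] at hNlt
  set B : Finset ℤ := (Finset.Icc (1 : ℤ) N).filter (fun b => b ∉ S) with hB
  have hcard : (S ∩ Set.Icc (1 : ℤ) (N : ℤ)).ncard + B.card = N := by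
    have h1 : S ∩ Set.Icc (1 : ℤ) (N : ℤ)
        = (((Finset.Icc (1 : ℤ) N).filter (fun b => b ∈ S) : Finset ℤ) : Set ℤ) := by
      ext y
      simp only [Set.mem_inter_iff, Set.mem_Icc, Finset.coe_filter, Finset.mem_Icc, Set.mem_setOf_eq]
      tauto
    rw [h1, Set.ncard_coe_finset, hB, Finset.card_filter_add_card_filter_not]
    simp
  have hsub : Finset.Icc (1 : ℤ) ((N / n : ℕ) : ℤ) ⊆
      B.biUnion fun b => (Finset.Icc 1 n).image (fun m : ℕ => b / (m : ℤ)) := by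
    intro x hx
    rw [Finset.mem_Icc] at hx
    obtain ⟨m, hm1, hmn, hmS⟩ := hcon x (by omega)
    have hm0 : (0 : ℤ) < m := by exact_mod_cast hm1
    have hle : (m : ℤ) * x ≤ N := by
      calc (m : ℤ) * x ≤ (n : ℤ) * ((N / n : ℕ) : ℤ) := by
            have : (m : ℤ) ≤ n := by exact_mod_cast hmn
            apply mul_le_mul this hx.2 (by omega) (by omega)
        _ ≤ N := by exact_mod_cast Nat.mul_div_le N n
    simp only [Finset.mem_biUnion, Finset.mem_image]
    refine ⟨m * x, ?_, m, Finset.mem_Icc.2 ⟨hm1, hmn⟩, Int.mul_ediv_cancel_left x hm0.ne'⟩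
    rw [hB, Finset.mem_filter, Finset.mem_Icc]
    exact ⟨⟨by nlinarith, hle⟩, hmS⟩
  have hle : N / n ≤ B.card * n := by
    have h1 := (Finset.card_le_card hsub).trans
      (Finset.card_biUnion_le_card_mul B _ n fun b _ => Finset.card_image_le.trans (by simp))
    rw [Int.card_Icc] at h1
    omega
  -- `N ≤ 2 n (N / n)`
  have h2 : N ≤ 2 * n * (B.card * n) := by
    have h3 := Nat.div_add_mod N n
    have h4 := Nat.mod_lt N (show n > 0 by omega)
    have h5 : n * (N / n) ≤ n * (B.card * n) := Nat.mul_le_mul_left n hle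
    have h6 : 2 * n * (B.card * n) = 2 * (n * (B.card * n)) := by ring
    omega
  have h2' : (N : ℝ) ≤ 2 * n ^ 2 * B.card := by
    have : (N : ℝ) ≤ 2 * n * (B.card * n) := by exact_mod_cast h2
    linarith
  have hcard' : ((S ∩ Set.Icc (1 : ℤ) (N : ℤ)).ncard : ℝ) + B.card = N := by exact_mod_cast hcard
  have h7 : (N : ℝ) / (2 * n ^ 2) ≤ B.card := by
    rw [div_le_iff₀ (by positivity)]
    linarith
  have h8 : (1 - 1 / (2 * (n : ℝ) ^ 2)) * N = N - N / (2 * n ^ 2) := by ring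
  linarith
end

section
/- Let P be a polynomial with integer coefficients of degree at least 2 with positive leading coefficient and P(0) = 0, and let S = P(ℤ) ∩ ℤ⁺ be the set of positive values of P. Then both S and its complement ℤ⁺ \ S are ladders. -/
/-- The set of leading coefficients of the degree `j` members of `A`. -/
noncomputable def pvLead (A : Finset (Polynomial ℤ)) (j : ℕ) : Finset ℤ :=
  (A.filter (fun q => q.natDegree = j)).image (fun q => q.coeff j)

theorem mem_pvLead (A : Finset (Polynomial ℤ)) (j : ℕ) (c : ℤ) :
    c ∈ pvLead A j ↔ ∃ q ∈ A, q.natDegree = j ∧ q.coeff j = c := by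
  simp [pvLead, and_assoc]

/-- The shifted difference polynomial `q(x+d) - q(d) - p(x)`. -/
noncomputable def pvShift (p q : Polynomial ℤ) (d : ℤ) : Polynomial ℤ :=
  Polynomial.taylor d q - Polynomial.C (q.eval d) - p

theorem pvShift_eval (p q : Polynomial ℤ) (d x : ℤ) :
    (pvShift p q d).eval x = q.eval (x + d) - q.eval d - p.eval x := by
  simp [pvShift, Polynomial.taylor_eval]

theorem pvShift_coeff (p q : Polynomial ℤ) (d : ℤ) (h1 : 1 ≤ q.natDegree) :
    (pvShift p q d).coeff q.natDegree = q.coeff q.natDegree - p.coeff q.natDegree := by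
  have h := Polynomial.coeff_taylor_natDegree d q
  rw [Polynomial.leadingCoeff] at h
  simp only [pvShift, Polynomial.coeff_sub, h, Polynomial.coeff_C]
  rw [if_neg (by omega)]
  ring

theorem pvShift_natDegree_le (p q : Polynomial ℤ) (d : ℤ) (h : p.natDegree ≤ q.natDegree) :
    (pvShift p q d).natDegree ≤ q.natDegree := by
  unfold pvShift
  refine (Polynomial.natDegree_sub_le _ _).trans (max_le ?_ h)
  refine (Polynomial.natDegree_sub_le _ _).trans (max_le ?_ ?_)
  · rw [Polynomial.natDegree_taylor]
  · simp

theorem pvShift_natDegree_eq (p q : Polynomial ℤ) (d : ℤ) (h : p.natDegree < q.natDegree) :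
    (pvShift p q d).natDegree = q.natDegree ∧
      (pvShift p q d).coeff q.natDegree = q.coeff q.natDegree := by
  have hc : (pvShift p q d).coeff q.natDegree = q.coeff q.natDegree := by
    rw [pvShift_coeff p q d (by omega), Polynomial.coeff_eq_zero_of_natDegree_lt h, sub_zero]
  refine ⟨le_antisymm (pvShift_natDegree_le p q d h.le) ?_, hc⟩
  apply Polynomial.le_natDegree_of_ne_zero
  rw [hc]
  have : q ≠ 0 := by rintro rfl; simp at h
  simpa using this

open Classical in
/-- The reduced family. -/
noncomputable def pvNext (A : Finset (Polynomial ℤ)) (p : Polynomial ℤ) (N : ℤ) :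
    Finset (Polynomial ℤ) :=
  ((A ×ˢ Finset.Icc 0 N).image (fun z => pvShift p z.1 z.2)).filter (fun q => q ≠ 0)

theorem mem_pvNext (A : Finset (Polynomial ℤ)) (p : Polynomial ℤ) (N : ℤ) (T : Polynomial ℤ) :
    T ∈ pvNext A p N ↔ (∃ q ∈ A, ∃ d, 0 ≤ d ∧ d ≤ N ∧ pvShift p q d = T) ∧ T ≠ 0 := by
  simp [pvNext, and_assoc]

/-- Admissible families. -/
def pvGood (D : ℕ) (A : Finset (Polynomial ℤ)) : Prop :=
  ∀ q ∈ A, q ≠ 0 ∧ q.eval 0 = 0 ∧ q.natDegree ≤ D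

theorem pvGood_pos {D : ℕ} {A : Finset (Polynomial ℤ)} (hA : pvGood D A) {q : Polynomial ℤ}
    (hq : q ∈ A) : 1 ≤ q.natDegree := by
  obtain ⟨h0, h1, -⟩ := hA q hq
  by_contra h
  have h2 : q.natDegree = 0 := by omega
  obtain ⟨c, rfl⟩ := Polynomial.natDegree_eq_zero.1 h2
  simp at h1
  simp [h1] at h0

theorem pvNext_good {D : ℕ} {A : Finset (Polynomial ℤ)} (hA : pvGood D A) {p : Polynomial ℤ}
    (hp : p ∈ A) (hmin : ∀ q ∈ A, p.natDegree ≤ q.natDegree) (N : ℤ) :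
    pvGood D (pvNext A p N) := by
  intro T hT
  obtain ⟨⟨q, hq, d, -, -, rfl⟩, h0⟩ := (mem_pvNext _ _ _ _).1 hT
  refine ⟨h0, ?_, (pvShift_natDegree_le p q d (hmin q hq)).trans (hA q hq).2.2⟩
  rw [pvShift_eval]
  simp [(hA p hp).2.1]

/-- The relation used for the induction. -/
def pvRel (D : ℕ) (A B : Finset (Polynomial ℤ)) : Prop :=
  Pi.Lex (fun i j : Fin (D + 1) => j < i) (fun {_} (a b : ℕ) => a < b)
    (fun i => (pvLead A i).card) (fun i => (pvLead B i).card)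

theorem pvRel_wf (D : ℕ) : WellFounded (pvRel D) := by
  have h : WellFounded (Pi.Lex (fun i j : Fin (D + 1) => j < i)
      (fun {_} (a b : ℕ) => a < b) : (Fin (D + 1) → ℕ) → (Fin (D + 1) → ℕ) → Prop) :=
    @Pi.Lex.wellFounded (Fin (D+1)) (fun _ => ℕ) (fun i j => j < i) (fun _ a b => a < b)
      (inferInstanceAs (IsStrictTotalOrder (Fin (D+1)) (· > ·))) _ (fun _ => wellFounded_lt)
  exact InvImage.wf (fun A : Finset (Polynomial ℤ) => fun i : Fin (D+1) => (pvLead A i).card) h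

theorem pvNext_rel {D : ℕ} {A : Finset (Polynomial ℤ)} (hA : pvGood D A) {p : Polynomial ℤ}
    (hp : p ∈ A) (hmin : ∀ q ∈ A, p.natDegree ≤ q.natDegree) (N : ℤ) (hN : 0 ≤ N) :
    pvRel D (pvNext A p N) A := by
  refine ⟨⟨p.natDegree, by have := (hA p hp).2.2; omega⟩, ?_, ?_⟩
  · rintro ⟨j, hj⟩ hlt
    have hlt : p.natDegree < j := hlt
    show (pvLead _ j).card = (pvLead _ j).card
    congr 1
    ext c
    rw [mem_pvLead, mem_pvLead]
    constructor
    · rintro ⟨T, hT, hd, hc⟩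
      obtain ⟨⟨q, hq, d, -, -, rfl⟩, h0⟩ := (mem_pvNext _ _ _ _).1 hT
      have h1 := pvShift_natDegree_le p q d (hmin q hq)
      obtain ⟨h2, h3⟩ := pvShift_natDegree_eq p q d (by omega)
      have h4 : q.natDegree = j := by omega
      refine ⟨q, hq, h4, ?_⟩
      rw [← hc, ← h4, h3]
    · rintro ⟨q, hq, hd, hc⟩
      obtain ⟨h2, h3⟩ := pvShift_natDegree_eq p q 0 (by omega)
      refine ⟨pvShift p q 0, (mem_pvNext _ _ _ _).2 ⟨⟨q, hq, 0, le_rfl, hN, rfl⟩, ?_⟩, by omega, ?_⟩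
      · intro h
        rw [h] at h2
        simp at h2
        omega
      · rw [← hd, h3, hd, hc]
  · show (pvLead _ p.natDegree).card < (pvLead _ p.natDegree).card
    set m := p.natDegree with hm
    have hpm : p.coeff m ∈ pvLead A m := (mem_pvLead _ _ _).2 ⟨p, hp, rfl, rfl⟩
    have hsub : pvLead (pvNext A p N) m ⊆
        ((pvLead A m).erase (p.coeff m)).image (fun c => c - p.coeff m) := by
      intro c hc
      obtain ⟨T, hT, hd, hc⟩ := (mem_pvLead _ _ _).1 hc
      obtain ⟨⟨q, hq, d, -, -, rfl⟩, h0⟩ := (mem_pvNext _ _ _ _).1 hT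
      have hqm : q.natDegree = m := by
        by_contra hne
        have := hmin q hq
        have := (pvShift_natDegree_eq p q d (by omega)).1
        omega
      have h3 := pvShift_coeff p q d (pvGood_pos hA hq)
      rw [hqm, hc] at h3
      have hc0 : c ≠ 0 := by
        rw [← hc, ← hd]
        simpa using h0
      rw [Finset.mem_image]
      refine ⟨q.coeff m, Finset.mem_erase.2 ⟨?_, (mem_pvLead _ _ _).2 ⟨q, hq, hqm, rfl⟩⟩, h3.symm⟩
      intro h
      rw [h] at h3
      omega
    calc _ ≤ _ := Finset.card_le_card hsub
      _ ≤ _ := Finset.card_image_le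
      _ < _ := Finset.card_erase_lt_of_mem hpm

theorem pv_bound (A : Finset (Polynomial ℤ)) (N : ℤ) :
    ∃ B : ℤ, 0 ≤ B ∧ ∀ q ∈ A, ∀ d, 0 ≤ d → d ≤ N → |q.eval d| ≤ B := by
  refine ⟨∑ z ∈ A ×ˢ Finset.Icc 0 N, |z.1.eval z.2|,
    Finset.sum_nonneg (fun _ _ => abs_nonneg _), ?_⟩
  intro q hq d h0 h1
  exact Finset.single_le_sum (f := fun z : Polynomial ℤ × ℤ => |z.1.eval z.2|)
    (fun _ _ => abs_nonneg _) (a := (q, d))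
    (Finset.mem_product.2 ⟨hq, Finset.mem_Icc.2 ⟨h0, h1⟩⟩)

/-- There is a monochromatic configuration of size at most `N`. -/
def pvMono {K : Type} (A : Finset (Polynomial ℤ)) (χ : ℤ → K) (N : ℤ) : Prop :=
  ∃ a d : ℤ, |a| ≤ N ∧ 1 ≤ d ∧ d ≤ N ∧ ∀ q ∈ A, χ (a + q.eval d) = χ a

/-- The bounded polynomial van der Waerden property. -/
def pvHolds (A : Finset (Polynomial ℤ)) : Prop :=
  ∀ (K : Type) [Finite K], ∃ N : ℤ, 0 ≤ N ∧ ∀ χ : ℤ → K, pvMono A χ N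

theorem pv_focus {D : ℕ} {A : Finset (Polynomial ℤ)} (hA : pvGood D A)
    (ih : ∀ B, pvRel D B A → pvGood D B → pvHolds B) {p : Polynomial ℤ}
    (hp : p ∈ A) (hmin : ∀ q ∈ A, p.natDegree ≤ q.natDegree) (K : Type) [Finite K] (r : ℕ) :
    ∃ N : ℤ, 0 ≤ N ∧ ∀ χ : ℤ → K, pvMono A χ N ∨
      ∃ (a : ℤ) (T : Finset K), |a| ≤ N ∧ T.card = r ∧ χ a ∉ T ∧
        ∀ c ∈ T, ∃ d, 1 ≤ d ∧ d ≤ N ∧ ∀ q ∈ A, χ (a + q.eval d) = c := by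
  classical
  induction r with
  | zero => exact ⟨0, le_rfl, fun χ => Or.inr ⟨0, ∅, by simp⟩⟩
  | succ r ihr =>
    obtain ⟨N, hN, hr⟩ := ihr
    obtain ⟨B, hB, hbd⟩ := pv_bound A N
    obtain ⟨M, hM, hm⟩ := ih _ (pvNext_rel hA hp hmin N hN) (pvNext_good hA hp hmin N)
      (Set.Icc (-(N + B)) (N + B) → K)
    obtain ⟨B', hB', hbd'⟩ := pv_bound A M
    refine ⟨N + M + B', by positivity, fun χ => ?_⟩
    obtain ⟨b, d, hb, hd1, hdM, hmono⟩ := hm (fun x t => χ (x + t.1))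
    have key : ∀ q ∈ A, ∀ e, 0 ≤ e → e ≤ N → ∀ t, |t| ≤ N + B →
        χ (b + (q.eval (d + e) - q.eval e - p.eval d) + t) = χ (b + t) := by
      intro q hq e he0 heN t ht
      rw [← pvShift_eval]
      by_cases h0 : pvShift p q e = 0
      · simp [h0]
      · have := hmono _ ((mem_pvNext _ _ _ _).2 ⟨⟨q, hq, e, he0, heN, rfl⟩, h0⟩)
        exact congrFun this ⟨t, abs_le.1 ht⟩
    rcases hr (fun t => χ (b + t)) with ⟨a, e, ha, he1, heN, h⟩ | ⟨a, T, ha, hT, hnot, h⟩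
    · left
      refine ⟨b + a, e, ?_, he1, by omega, fun q hq => ?_⟩
      · have := abs_add_le b a
        omega
      · rw [add_assoc]; exact h q hq
    · by_cases hmn : pvMono A χ (N + M + B')
      · exact Or.inl hmn
      right
      have hpd := hbd' p hp d (by omega) hdM
      have hsz : |b + a - p.eval d| ≤ N + M + B' := by
        rw [abs_le] at *
        omega
      have hall : ∀ c ∈ insert (χ (b + a)) T, ∃ e, 1 ≤ e ∧ e ≤ N + M + B' ∧
          ∀ q ∈ A, χ (b + a - p.eval d + q.eval e) = c := by
        intro c hc
        rcases Finset.mem_insert.1 hc with rfl | hc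
        · refine ⟨d, hd1, by omega, fun q hq => ?_⟩
          rw [← key q hq 0 le_rfl hN a (by omega), (hA q hq).2.1]
          congr 1
          rw [add_zero]
          ring
        · obtain ⟨e, he1, heN, he⟩ := h c hc
          refine ⟨d + e, by omega, by omega, fun q hq => ?_⟩
          rw [← he q hq, ← key q hq e (by omega) heN (a + q.eval e) ?_]
          · congr 1
            ring
          · have := abs_add_le a (q.eval e)
            have := hbd q hq e (by omega) heN
            omega
      refine ⟨b + a - p.eval d, insert (χ (b + a)) T, hsz, ?_, ?_, hall⟩
      · rw [Finset.card_insert_of_notMem hnot, hT]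
      · intro hin
        obtain ⟨e, he1, he2, he⟩ := hall _ hin
        exact hmn ⟨_, e, hsz, he1, he2, he⟩

theorem pv_main (D : ℕ) (A : Finset (Polynomial ℤ)) (hA : pvGood D A) : pvHolds A := by
  induction A using (pvRel_wf D).induction with
  | _ A ih =>
    intro K _
    by_cases hne : A.Nonempty
    · obtain ⟨p, hp, hmin⟩ := Finset.exists_min_image A Polynomial.natDegree hne
      have : Fintype K := Fintype.ofFinite K
      obtain ⟨N, hN, h⟩ := pv_focus hA ih hp hmin K (Fintype.card K)
      refine ⟨N, hN, fun χ => ?_⟩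
      rcases h χ with h | ⟨a, T, -, hT, hnot, -⟩
      · exact h
      · rw [Finset.card_eq_iff_eq_univ] at hT
        simp [hT] at hnot
    · rw [Finset.not_nonempty_iff_eq_empty] at hne
      subst hne
      exact ⟨1, by norm_num, fun χ => ⟨0, 1, by simp⟩⟩

/-- Polynomial van der Waerden for multiples of one polynomial. -/
theorem pv_multiples (P : Polynomial ℤ) (hP : P ≠ 0) (h0 : P.eval 0 = 0) (L : ℕ)
    (K : Type) [Finite K] : ∃ N : ℤ, 0 ≤ N ∧ ∀ χ : ℤ → K, ∃ a d : ℤ, 1 ≤ d ∧ d ≤ N ∧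
      ∀ i : ℕ, i < L → χ (a + i * P.eval d) = χ a := by
  classical
  let A : Finset (Polynomial ℤ) := (Finset.Ico 1 L).image (fun i : ℕ => Polynomial.C (i : ℤ) * P)
  have hA : pvGood P.natDegree A := by
    intro q hq
    obtain ⟨i, hi, rfl⟩ := Finset.mem_image.1 hq
    have hi1 := (Finset.mem_Ico.1 hi).1
    refine ⟨mul_ne_zero ?_ hP, by simp [h0], Polynomial.natDegree_C_mul_le _ _⟩
    rw [Ne, Polynomial.C_eq_zero]
    omega
  obtain ⟨N, hN, h⟩ := pv_main _ A hA K
  refine ⟨N, hN, fun χ => ?_⟩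
  obtain ⟨a, d, -, h1, h2, h3⟩ := h χ
  refine ⟨a, d, h1, h2, fun i hi => ?_⟩
  rcases Nat.eq_zero_or_pos i with rfl | hpos
  · simp
  · have := h3 _ (Finset.mem_image.2 ⟨i, Finset.mem_Ico.2 ⟨hpos, hi⟩, rfl⟩)
    simpa using this

theorem pv_eventually_pos (P : Polynomial ℤ) (hdeg : 1 ≤ P.natDegree)
    (hlead : 0 < P.leadingCoeff) : ∃ M : ℤ, 1 ≤ M ∧ ∀ n, M ≤ n → 0 < P.eval n := by
  have hinj : Function.Injective (Int.castRingHom ℝ) := Int.cast_injective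
  have h := Polynomial.tendsto_atTop_of_leadingCoeff_nonneg (P.map (Int.castRingHom ℝ))
    (by
      rw [Polynomial.degree_map_eq_of_injective hinj]
      exact Polynomial.natDegree_pos_iff_degree_pos.1 hdeg)
    (by
      rw [Polynomial.leadingCoeff_map_of_injective hinj]
      simpa using hlead.le)
  obtain ⟨x, hx⟩ := Filter.eventually_atTop.1 (h.eventually_gt_atTop 0)
  refine ⟨max 1 ⌈x⌉, le_max_left _ _, fun n hn => ?_⟩
  have h1 : x ≤ (n : ℝ) := (Int.le_ceil x).trans (by exact_mod_cast (le_max_right _ _).trans hn)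
  have h2 := hx _ h1
  rw [show (n : ℝ) = Int.castRingHom ℝ n from rfl, Polynomial.eval_map_apply] at h2
  simpa using h2

/-- A nonconstant polynomial takes small values only on a bounded set. -/
theorem pv_small_values (Q : Polynomial ℤ) (hdeg : 1 ≤ Q.natDegree) (W : ℤ) :
    ∃ B : ℤ, ∀ n, |Q.eval n| ≤ W → |n| ≤ B := by
  have hfin : (⋃ c ∈ Set.Icc (-W) W, {n : ℤ | (Q - Polynomial.C c).IsRoot n}).Finite := by
    refine (Set.finite_Icc _ _).biUnion (fun c _ => Polynomial.finite_setOfPred_isRoot ?_)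
    intro h
    rw [sub_eq_zero.1 h] at hdeg
    simp at hdeg
  obtain ⟨B, hB⟩ := (hfin.image (fun n => |n|)).bddAbove
  refine ⟨B, fun n hn => hB ⟨n, ?_, rfl⟩⟩
  simp only [Set.mem_iUnion]
  exact ⟨Q.eval n, abs_le.1 hn, by simp⟩

/-- Some multiple `m` has none of `m, 2m, …, Wm` in the values of `P`. -/
theorem pv_avoid (P : Polynomial ℤ) (hdeg : 2 ≤ P.natDegree) (hzero : P.eval 0 = 0) (W : ℤ) :
    ∃ m : ℤ, 0 < m ∧ ∀ j, 1 ≤ j → j ≤ W → ∀ x : ℤ, P.eval x ≠ j * m := by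
  obtain ⟨Q, hQ⟩ : Polynomial.X ∣ P := by
    rw [Polynomial.X_dvd_iff, Polynomial.coeff_zero_eq_eval_zero, hzero]
  have hQ0 : Q ≠ 0 := by rintro rfl; simp [hQ] at hdeg
  have hQd : 1 ≤ Q.natDegree := by
    rw [hQ, Polynomial.natDegree_X_mul hQ0] at hdeg
    omega
  obtain ⟨B, hB⟩ := pv_small_values Q hQd W
  obtain ⟨B', hB'0, hB'⟩ : ∃ B' : ℤ, 0 ≤ B' ∧ ∀ n, |n| ≤ W → |Q.eval n| ≤ B' := by
    refine ⟨∑ n ∈ Finset.Icc (-W) W, |Q.eval n|, Finset.sum_nonneg (fun _ _ => abs_nonneg _), ?_⟩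
    intro n hn
    exact Finset.single_le_sum (f := fun n : ℤ => |Q.eval n|) (fun _ _ => abs_nonneg _)
      (Finset.mem_Icc.2 (abs_le.1 hn))
  obtain ⟨p, hpge, hp⟩ := Nat.exists_infinite_primes (B.toNat + B'.toNat + 1)
  have hpos : (0 : ℤ) < p := by exact_mod_cast hp.pos
  refine ⟨p, hpos, fun j hj1 hjW x hx => ?_⟩
  have hx' : x * Q.eval x = j * p := by rw [← hx, hQ]; simp
  have hjp : 0 < j * (p : ℤ) := by positivity
  have hx0 : x ≠ 0 := by rintro rfl; simp at hx'; omega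
  have hq0 : Q.eval x ≠ 0 := by intro h; rw [h] at hx'; simp at hx'; omega
  have hpp : Prime (p : ℤ) := Nat.prime_iff_prime_int.1 hp
  have hdiv : (p : ℤ) ∣ x * Q.eval x := ⟨j, by rw [hx', mul_comm]⟩
  have aux : ∀ u v : ℤ, v ≠ 0 → u * v = j * p → (p : ℤ) ∣ u → u ≠ 0 →
      |v| ≤ W ∧ (p : ℤ) ≤ |u| := by
    rintro u v hv huv ⟨w, rfl⟩ hu
    have h1 : w * v = j := by
      apply mul_left_cancel₀ hpos.ne'
      linarith
    have hw : w ≠ 0 := by rintro rfl; simp at hu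
    have hw1 : 1 ≤ |w| := Int.one_le_abs hw
    have h2 : |w| * |v| = j := by rw [← abs_mul, h1, abs_of_pos (by omega)]
    constructor
    · nlinarith [abs_nonneg v]
    · rw [abs_mul, abs_of_pos hpos]
      nlinarith
  rcases hpp.dvd_or_dvd hdiv with h | h
  · obtain ⟨h1, h2⟩ := aux _ _ hq0 hx' h hx0
    have := hB x h1
    omega
  · obtain ⟨h1, h2⟩ := aux _ _ hx0 (by rw [mul_comm, hx']) h hq0
    have := hB' x h1
    omega

/-- If `P ∈ ℤ[x]` has degree at least 2, positive leading coefficient, and `P(0) = 0`,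
then the set `S` of positive values of `P` and its complement within `ℤ⁺` are both
ladders. -/
theorem polynomial_values_and_complement_ladders (P : Polynomial ℤ)
    (hdeg : 2 ≤ P.natDegree) (hlead : 0 < P.leadingCoeff) (hzero : P.eval 0 = 0) :
    IsLadder {y : ℤ | 0 < y ∧ ∃ x : ℤ, P.eval x = y} ∧
      IsLadder ({x : ℤ | 0 < x} \ {y : ℤ | 0 < y ∧ ∃ x : ℤ, P.eval x = y}) := by
  have hP0 : P ≠ 0 := by rintro rfl; simp at hdeg
  constructor
  · intro k _ χ L
    obtain ⟨M, hM, hpos⟩ := pv_eventually_pos P (by omega) hlead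
    have hcomp : ∀ n : ℤ, (P.comp (Polynomial.C M * Polynomial.X)).eval n = P.eval (M * n) := by
      intro n
      simp
    obtain ⟨N, -, h⟩ := pv_multiples (P.comp (Polynomial.C M * Polynomial.X))
      (by
        intro h
        have h1 := hpos (M * 1) (by omega)
        rw [← hcomp, h] at h1
        simp at h1)
      (by rw [hcomp, mul_zero, hzero]) L (Fin k)
    obtain ⟨a, d, hd, -, hmono⟩ := h χ
    simp only [hcomp] at hmono
    exact ⟨a, P.eval (M * d), ⟨hpos _ (by nlinarith), _, rfl⟩, hmono⟩
  · intro k _ χ L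
    obtain ⟨N, -, h⟩ := pv_multiples Polynomial.X Polynomial.X_ne_zero (by simp) L (Fin k)
    obtain ⟨m, hm, hav⟩ := pv_avoid P hdeg hzero N
    obtain ⟨a, d, hd, hdN, hmono⟩ := h (fun t => χ (m * t))
    have hdm : 0 < d * m := by positivity
    refine ⟨m * a, d * m, ⟨hdm, ?_⟩, fun i hi => ?_⟩
    · rintro ⟨-, x, hx⟩
      exact hav d hd hdN x hx
    · rw [← hmono i hi]
      congr 1
      simp only [Polynomial.eval_X]
      ring
end

section
/- For every polynomial P with integer coefficients of degree at least 2 with P(0) = 0, there exists a ladder S ⊆ ℤ⁺ such that S ∩ P(ℤ) = ∅. (In particular, it is not true that S ∩ P(ℤ) is a ladder for every ladder S and every such nonlinear P.) -/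
open Polynomial in
lemma exists_scale (P : Polynomial ℤ) (hdeg : 2 ≤ P.natDegree) (hzero : P.eval 0 = 0)
    (n : ℕ) (hn : 1 ≤ n) :
    ∃ c : ℤ, 0 < c ∧ ∀ j : ℤ, 1 ≤ j → j ≤ n → ∀ x : ℤ, P.eval x ≠ c * j := by
  obtain ⟨Q, hQ⟩ : (X : ℤ[X]) ∣ P := by
    rw [X_dvd_iff, coeff_zero_eq_eval_zero, hzero]
  have hQdeg : 1 ≤ Q.natDegree := by
    have h0 : Q ≠ 0 := by
      rintro rfl
      simp [hQ] at hdeg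
    rw [hQ, natDegree_X_mul h0] at hdeg
    omega
  have hfin : {x : ℤ | |Q.eval x| < 4 * (n : ℤ) ^ 2}.Finite := by
    have : {x : ℤ | |Q.eval x| < 4 * (n : ℤ) ^ 2} ⊆
        ⋃ v ∈ Finset.Ioo (-(4 * (n : ℤ) ^ 2)) (4 * (n : ℤ) ^ 2), {x | (Q - C v).IsRoot x} := by
      intro x hx
      simp only [Set.mem_ofPred_eq, abs_lt] at hx
      simp only [Set.mem_iUnion]
      exact ⟨Q.eval x, by simpa using hx, by simp⟩
    refine Set.Finite.subset (Set.Finite.biUnion (Finset.finite_toSet _) fun v _ => ?_) this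
    apply finite_setOfPred_isRoot
    intro h
    rw [sub_eq_zero] at h
    rw [h, natDegree_C] at hQdeg
    omega
  obtain ⟨B, hB⟩ : ∃ B : ℤ, ∀ x : ℤ, |Q.eval x| < 4 * (n : ℤ) ^ 2 → |x| ≤ B := by
    obtain ⟨B, hB⟩ := (hfin.image (fun x => |x|)).bddAbove
    exact ⟨B, fun x hx => hB ⟨x, hx, rfl⟩⟩
  obtain ⟨T, hT1, hTB⟩ : ∃ T : ℤ, 1 ≤ T ∧ B ≤ T := ⟨max 1 B, le_max_left _ _, le_max_right _ _⟩
  have hn' : (1 : ℤ) ≤ n := by exact_mod_cast hn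
  by_contra! hcon
  choose! j hj1 hjn x hx using hcon
  have hbox : ∀ c ∈ Finset.Icc (1 : ℤ) (4 * (n : ℤ) ^ 2 * T),
      (fun c => (j c, x c)) c ∈ Finset.Icc (1 : ℤ) n ×ˢ Finset.Icc (-(n * T : ℤ)) (n * T) := by
    intro c hc
    simp only [Finset.mem_Icc] at hc
    have hc0 : 0 < c := by omega
    have a1 := hj1 c hc0
    have a2 := hjn c hc0
    have a3 := hx c hc0
    simp only [Finset.mem_product, Finset.mem_Icc]
    refine ⟨⟨a1, a2⟩, ?_⟩
    rw [← abs_le]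
    by_cases hlt : |Q.eval (x c)| < 4 * (n : ℤ) ^ 2
    · have := hB _ hlt
      nlinarith
    · push Not at hlt
      have e : |x c| * |Q.eval (x c)| = c * j c := by
        rw [← abs_mul, ← abs_of_pos (show 0 < c * j c by positivity), ← a3, hQ]
        simp
      have h1 : |x c| * (4 * (n : ℤ) ^ 2) ≤ |x c| * |Q.eval (x c)| :=
        mul_le_mul_of_nonneg_left hlt (abs_nonneg _)
      have h2 : c * j c ≤ (4 * (n : ℤ) ^ 2 * T) * n := by
        apply mul_le_mul hc.2 a2 (by omega) (by positivity)
      have h3 : |x c| * (4 * (n : ℤ) ^ 2) ≤ (n * T) * (4 * (n : ℤ) ^ 2) := by linarith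
      exact le_of_mul_le_mul_right h3 (by positivity)
  have hinj : Set.InjOn (fun c => (j c, x c)) (Finset.Icc (1 : ℤ) (4 * (n : ℤ) ^ 2 * T)) := by
    intro c hc d hd h
    simp only [Finset.coe_Icc, Set.mem_Icc] at hc hd
    simp only [Prod.mk.injEq] at h
    have hc0 : 0 < c := by omega
    have hd0 : 0 < d := by omega
    have h1 := hx c hc0
    have h2 := hx d hd0
    rw [h.1, h.2, h2] at h1
    have := hj1 d hd0
    exact (mul_right_cancel₀ (by omega) h1).symm
  have hcard := Finset.card_le_card_of_injOn _ hbox hinj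
  rw [Finset.card_product, Int.card_Icc, Int.card_Icc, Int.card_Icc] at hcard
  have hz : (((4 * (n : ℤ) ^ 2 * T + 1 - 1).toNat : ℕ) : ℤ) ≤
      (((n : ℤ) + 1 - 1).toNat : ℕ) * ((n * T + 1 - -(n * T : ℤ)).toNat : ℕ) := by
    exact_mod_cast hcard
  have hnT : 1 ≤ (n : ℤ) * T := by nlinarith
  rw [Int.toNat_of_nonneg (by nlinarith), Int.toNat_of_nonneg (by omega),
    Int.toNat_of_nonneg (by omega)] at hz
  nlinarith

/-- For every integer polynomial `P` of degree at least 2 with `P(0) = 0`, there is a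
ladder `S ⊆ ℤ⁺` disjoint from the set of values of `P`. -/
theorem exists_ladder_disjoint_from_polynomial_values (P : Polynomial ℤ)
    (hdeg : 2 ≤ P.natDegree) (hzero : P.eval 0 = 0) :
    ∃ S : Set ℤ, S ⊆ {x : ℤ | 0 < x} ∧ IsLadder S ∧
      S ∩ {y : ℤ | ∃ x : ℤ, P.eval x = y} = ∅ := by
  refine ⟨{d : ℤ | 0 < d ∧ ∀ x : ℤ, P.eval x ≠ d}, fun d hd => hd.1, ?_, ?_⟩
  · intro k _ χ L
    obtain ⟨ι, _, hι⟩ :=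
      Combinatorics.Line.exists_mono_in_high_dimension (Fin (L + 1)) (Fin k)
    obtain ⟨c, hc0, hc⟩ := exists_scale P hdeg hzero (Fintype.card ι + 1) (by omega)
    obtain ⟨l, col, hl⟩ := hι fun v => χ (c * ∑ i, ((v i : ℕ) : ℤ))
    classical
    let A : Finset ι := Finset.univ.filter fun i => l.idxFun i = none
    have hA1 : 1 ≤ A.card := by
      obtain ⟨i, hi⟩ := l.proper
      exact Finset.card_pos.mpr ⟨i, by simp [A, hi]⟩
    have hA2 : A.card ≤ Fintype.card ι := Finset.card_le_univ _
    have key : ∀ t : Fin (L + 1), ∑ i, ((l t i : ℕ) : ℤ) =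
        ∑ i, ((l 0 i : ℕ) : ℤ) + (t : ℕ) * (A.card : ℤ) := by
      intro t
      have : (t : ℕ) * (A.card : ℤ) = ∑ i, if l.idxFun i = none then ((t : ℕ) : ℤ) else 0 := by
        rw [← Finset.sum_filter, Finset.sum_const, nsmul_eq_mul, mul_comm]
      rw [this, ← Finset.sum_add_distrib]
      refine Finset.sum_congr rfl fun i _ => ?_
      rcases h : l.idxFun i with _ | y
      · simp [h]
      · simp [h]
    refine ⟨c * ∑ i, ((l 0 i : ℕ) : ℤ), c * A.card, ⟨mul_pos hc0 (by exact_mod_cast hA1), ?_⟩, ?_⟩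
    · exact hc _ (by exact_mod_cast hA1) (by exact_mod_cast (by omega))
    · intro i hi
      have h1 := hl ⟨i, by omega⟩
      have h0 := hl 0
      simp only at h1 h0
      rw [h0, ← h1, key ⟨i, by omega⟩]
      congr 1
      ring
  · ext y
    simp only [Set.mem_inter_iff, Set.mem_ofPred_eq, Set.mem_empty_iff_false, iff_false]
    rintro ⟨⟨_, h⟩, x, hx⟩
    exact h x hx
end

section
/- Any set S ⊆ ℤ⁺ with upper density 1 is infinitely walkable, i.e., k-walkable for every k ≥ 1. -/
/-- `S` is `k`-walkable: every coloring `χ : ℤ → Fin k` admits an infinite increasing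
monochromatic sequence whose consecutive differences lie in `S`. -/
def IsKWalkable (S : Set ℤ) (k : ℕ) : Prop :=
  ∀ χ : ℤ → Fin k, ∃ a : ℕ → ℤ, StrictMono a ∧
    (∀ i : ℕ, a (i + 1) - a i ∈ S) ∧ ∀ i : ℕ, χ (a i) = χ (a 0)

theorem count_step (S : Set ℤ) (M : ℕ) (h : ∀ z : ℤ, ∃ y : ℤ, 0 ≤ y ∧ y ≤ M ∧ z - y ∉ S) (n : ℕ) :
    (S ∩ Set.Icc (1 : ℤ) ((n + (M + 1) : ℕ) : ℤ)).ncard ≤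
      (S ∩ Set.Icc (1 : ℤ) (n : ℤ)).ncard + M := by
  obtain ⟨y, hy0, hyM, hy⟩ := h ((n + (M + 1) : ℕ) : ℤ)
  set w : ℤ := ((n + (M + 1) : ℕ) : ℤ) - y with hw
  have hfin : (Set.Icc ((n : ℤ) + 1) ((n + (M + 1) : ℕ) : ℤ)).Finite := Set.finite_Icc _ _
  have hwm : w ∈ Set.Icc ((n : ℤ) + 1) ((n + (M + 1) : ℕ) : ℤ) := by
    constructor <;> push_cast at * <;> omega
  have hsub : S ∩ Set.Icc (1 : ℤ) ((n + (M + 1) : ℕ) : ℤ) ⊆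
      (S ∩ Set.Icc (1 : ℤ) (n : ℤ)) ∪ (Set.Icc ((n : ℤ) + 1) ((n + (M + 1) : ℕ) : ℤ) \ {w}) := by
    rintro s ⟨hs, h1, h2⟩
    by_cases hsn : s ≤ n
    · exact Or.inl ⟨hs, h1, hsn⟩
    · refine Or.inr ⟨⟨by omega, h2⟩, ?_⟩
      rintro rfl
      exact hy hs
  have hc : (Set.Icc ((n : ℤ) + 1) ((n + (M + 1) : ℕ) : ℤ) \ {w}).ncard = M := by
    rw [Set.ncard_sdiff_singleton_of_mem hwm, ← Finset.coe_Icc, Set.ncard_coe_finset, Int.card_Icc]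
    push_cast
    omega
  calc _ ≤ _ := Set.ncard_le_ncard hsub
        (((Set.finite_Icc _ _).subset Set.inter_subset_right).union (hfin.subset Set.sdiff_subset))
    _ ≤ _ := Set.ncard_union_le _ _
    _ = _ := by rw [hc]

theorem count_bound (S : Set ℤ) (M : ℕ) (h : ∀ z : ℤ, ∃ y : ℤ, 0 ≤ y ∧ y ≤ M ∧ z - y ∉ S) (n : ℕ) :
    (M + 1) * (S ∩ Set.Icc (1 : ℤ) (n : ℤ)).ncard ≤ M * n + (M + 1) * (M + 1) := by
  induction n using Nat.strong_induction_on with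
  | _ n ih =>
    by_cases hn : n < M + 1
    · have : (S ∩ Set.Icc (1 : ℤ) (n : ℤ)).ncard ≤ n := by
        calc _ ≤ (Set.Icc (1 : ℤ) (n : ℤ)).ncard :=
              Set.ncard_le_ncard Set.inter_subset_right (Set.finite_Icc _ _)
          _ = n := by
            rw [← Finset.coe_Icc, Set.ncard_coe_finset, Int.card_Icc]; omega
      nlinarith
    · obtain ⟨m, rfl⟩ : ∃ m, n = m + (M + 1) := ⟨n - (M + 1), by omega⟩
      have h1 := ih m (by omega)
      have h2 := count_step S M h m
      nlinarith

theorem thick_of_density (S : Set ℤ) (hdens : HasUpperDensityOne S) (M : ℕ) :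
    ∃ z : ℤ, ∀ y : ℤ, 0 ≤ y → y ≤ M → z - y ∈ S := by
  by_contra! h
  have hb := count_bound S M h
  unfold HasUpperDensityOne at hdens
  have hlt : ((M : ℝ) + 1 / 2) / (M + 1) < Filter.atTop.limsup
      (fun n : ℕ => ((S ∩ Set.Icc (1 : ℤ) (n : ℤ)).ncard : ℝ) / n) := by
    rw [hdens, div_lt_one (by positivity)]
    linarith
  have hf := Filter.frequently_lt_of_lt_limsup
    (Filter.isCoboundedUnder_le_of_le Filter.atTop (x := 0) (fun n => by positivity)) hlt
  obtain ⟨n, hlt, hn⟩ := (hf.and_eventually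
    (Filter.eventually_ge_atTop (2 * (M + 1) * (M + 1) + 1))).exists
  have hn0 : (0 : ℝ) < n := by
    have : 0 < n := by omega
    exact_mod_cast this
  rw [div_lt_div_iff₀ (by positivity) hn0] at hlt
  have hbn : ((M : ℝ) + 1) * ((S ∩ Set.Icc (1 : ℤ) (n : ℤ)).ncard : ℝ) ≤
    M * n + (M + 1) * (M + 1) := by exact_mod_cast hb n
  have hnM : 2 * ((M : ℝ) + 1) * (M + 1) + 1 ≤ n := by exact_mod_cast hn
  nlinarith

/-- Any set `S ⊆ ℤ⁺` with upper density 1 is infinitely walkable. -/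
theorem infinitely_walkable_of_upper_density_one (S : Set ℤ) (hS : ∀ s ∈ S, 0 < s)
    (hdens : HasUpperDensityOne S) : ∀ k : ℕ, 1 ≤ k → IsKWalkable S k := by
  intro k _ χ
  have hstep : ∀ M : ℕ, ∃ z : ℕ, ∀ y : ℕ, y ≤ M → (z : ℤ) - y ∈ S := by
    intro M
    obtain ⟨z, hz⟩ := thick_of_density S hdens M
    have h0 := hS _ (hz 0 le_rfl (by positivity))
    refine ⟨z.toNat, fun y hy => ?_⟩
    have := hz y (by positivity) (by exact_mod_cast hy)
    rwa [Int.toNat_of_nonneg (by omega)]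
  choose f hf using hstep
  let x : ℕ → ℕ := fun n => f^[n] 0
  have hx : ∀ n, x (n + 1) = f (x n) := fun n => Function.iterate_succ_apply' f n 0
  have hmono : StrictMono x := by
    refine strictMono_nat_of_lt_succ fun n => ?_
    have := hS _ (hf (x n) (x n) le_rfl)
    rw [hx]
    omega
  have hdiff : ∀ i j, i < j → (x j : ℤ) - x i ∈ S := by
    intro i j hij
    obtain ⟨m, rfl⟩ : ∃ m, j = m + 1 := ⟨j - 1, by omega⟩
    rw [hx]
    exact hf _ _ (hmono.monotone (by omega))
  obtain ⟨c, hc⟩ := Finite.exists_infinite_fiber (fun n => χ (x n))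
  classical
  let T : Set ℕ := {n | χ (x n) = c}
  have hT : Infinite T := hc
  let e := Nat.orderEmbeddingOfSet T
  have he : ∀ n, χ (x (e n)) = c := fun n =>
    (Nat.orderEmbeddingOfSet_range T).subset ⟨n, rfl⟩
  refine ⟨fun n => x (e n), ?_, ?_, ?_⟩
  · intro i j hij
    exact Int.ofNat_lt.mpr <| hmono (e.strictMono hij)
  · intro i
    exact hdiff _ _ (e.strictMono (Nat.lt_succ_self i))
  · intro i
    simp only [he]
end

section
/- If S ⊆ ℤ⁺ has upper density 1, then there exists an infinite set H ⊆ ℤ⁺ such that every positive difference of two elements of H lies in S, i.e., for all h, h' ∈ H with h < h' one has h' − h ∈ S. -/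
lemma thick_aux (S : Set ℤ) (hdens : HasUpperDensityOne S) (L : ℕ) (hL : 0 < L) :
    ∃ a : ℤ, 0 < a ∧ ∀ x, a ≤ x → x < a + L → x ∈ S := by
  by_contra! hcon
  choose! f hf1 hf2 hf3 using hcon
  have hLz : (0 : ℤ) < L := by exact_mod_cast hL
  have hLr : (0 : ℝ) < L := by exact_mod_cast hL
  have key : ∀ n : ℕ, (S ∩ Set.Icc (1 : ℤ) (n : ℤ)).ncard + n / L ≤ n := by
    intro n
    set A := S ∩ Set.Icc (1 : ℤ) (n : ℤ) with hA
    set B := (fun j : ℕ => f (1 + j * L)) '' (Finset.range (n / L) : Set ℕ) with hB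
    have hpos : ∀ j : ℕ, (0 : ℤ) < 1 + j * L := fun j => by positivity
    have hBc : B.ncard = n / L := by
      rw [hB, Set.ncard_image_of_injective, Set.ncard_coe_finset, Finset.card_range]
      apply StrictMono.injective
      apply strictMono_nat_of_lt_succ
      intro j
      have h1 := hf2 _ (hpos j)
      have h2 := hf1 _ (hpos (j + 1))
      push_cast at h2 ⊢
      linarith
    have hBI : B ⊆ Set.Icc (1 : ℤ) n := by
      rintro _ ⟨j, hj, rfl⟩
      have hj : j < n / L := by simpa using hj
      have h1 := hf2 _ (hpos j)
      have h2 := hf1 _ (hpos j)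
      have h3 : (j + 1) * L ≤ n := le_trans (Nat.mul_le_mul_right _ hj) (Nat.div_mul_le_self n L)
      have h4 : ((j : ℤ) + 1) * L ≤ n := by exact_mod_cast h3
      have h5 : (0 : ℤ) ≤ j * L := by positivity
      constructor <;> simp only <;> linarith
    have hd : Disjoint A B := by
      rw [Set.disjoint_left]
      rintro _ hx ⟨j, _, rfl⟩
      exact hf3 _ (hpos j) hx.1
    have hfin := Set.finite_Icc (1 : ℤ) n
    have hAI : A ⊆ Set.Icc (1 : ℤ) n := Set.inter_subset_right
    have := Set.ncard_union_eq hd (hfin.subset hAI) (hfin.subset hBI)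
    have h2 := Set.ncard_le_ncard (Set.union_subset hAI hBI) hfin
    have h3 : (Set.Icc (1 : ℤ) n).ncard = n := by
      rw [← Finset.coe_Icc, Set.ncard_coe_finset]; simp
    omega
  have hle : Filter.atTop.limsup
      (fun n : ℕ => ((S ∩ Set.Icc (1 : ℤ) (n : ℤ)).ncard : ℝ) / n) ≤ 1 - 1 / (2 * L) := by
    apply Filter.limsup_le_of_le
    · refine Filter.isCoboundedUnder_le_of_le Filter.atTop (x := 0) ?_
      intro n
      positivity
    · filter_upwards [Filter.eventually_ge_atTop (2 * L)] with n hn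
      have hn0 : (0 : ℝ) < n := by
        have : 0 < n := by omega
        exact_mod_cast this
      have hk : ((S ∩ Set.Icc (1 : ℤ) (n : ℤ)).ncard : ℝ) + (n / L : ℕ) ≤ n := by
        exact_mod_cast key n
      have hfl : (n : ℝ) / L < (n / L : ℕ) + 1 := by
        rw [div_lt_iff₀ hLr]
        exact_mod_cast Nat.lt_mul_of_div_lt (Nat.lt_succ_self (n / L)) hL
      have hn' : (2 : ℝ) * L ≤ n := by exact_mod_cast hn
      have h2 : (2 : ℝ) ≤ n / L := by rwa [le_div_iff₀ hLr]
      rw [div_le_iff₀ hn0]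
      have : (1 - 1 / (2 * (L : ℝ))) * n = n - (n / L) / 2 := by field_simp
      rw [this]
      linarith
  rw [HasUpperDensityOne] at hdens
  rw [hdens] at hle
  have : (0 : ℝ) < 1 / (2 * L) := by positivity
  linarith

/-- If `S ⊆ ℤ⁺` has upper density 1, then there is an infinite set `H ⊆ ℤ⁺` all of
whose positive pairwise differences lie in `S`. -/
theorem exists_infinite_difference_set_of_upper_density_one (S : Set ℤ)
    (hS : ∀ s ∈ S, 0 < s) (hdens : HasUpperDensityOne S) :
    ∃ H : Set ℤ, H ⊆ {x : ℤ | 0 < x} ∧ H.Infinite ∧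
      ∀ h ∈ H, ∀ h' ∈ H, h < h' → h' - h ∈ S := by
  have step : ∀ h : ℤ, 0 < h → ∃ x, h < x ∧ ∀ i, 0 < i → i ≤ h → x - i ∈ S := by
    intro h hh
    obtain ⟨a, ha, h1⟩ := thick_aux S hdens h.toNat (by omega)
    refine ⟨a + h, by omega, fun i hi hih => h1 _ (by omega) (by omega)⟩
  choose! g hg1 hg2 using step
  let u : ℕ → ℤ := fun n => g^[n] 1
  have us : ∀ n, u (n + 1) = g (u n) := fun n => Function.iterate_succ_apply' g n 1
  have upos : ∀ n, 0 < u n := by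
    intro n
    induction n with
    | zero => simp [u]
    | succ n ih => rw [us]; exact ih.trans (hg1 _ ih)
  have umono : StrictMono u := strictMono_nat_of_lt_succ fun n => by
    rw [us]; exact hg1 _ (upos n)
  refine ⟨Set.range u, ?_, Set.infinite_range_of_injective umono.injective, ?_⟩
  · rintro _ ⟨n, rfl⟩
    exact upos n
  · rintro _ ⟨m, rfl⟩ _ ⟨n, rfl⟩ hmn
    have h := umono.lt_iff_lt.mp hmn
    obtain ⟨k, rfl⟩ : ∃ k, n = k + 1 := ⟨n - 1, by omega⟩
    rw [us]
    exact hg2 _ (upos k) _ (upos m) (umono.monotone (by omega))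
end

section
/- Let G be an acyclic directed graph on a vertex set V, given by an edge relation r : V → V → Prop admitting no directed cycles. Then G has infinite chromatic number if and only if G is accessible. -/
/-- A directed graph with edge relation `r` has *infinite chromatic number* if every
finite coloring has a monochromatic edge. -/
def InfChromatic {V : Type*} (r : V → V → Prop) : Prop :=
  ∀ k : ℕ, 1 ≤ k → ∀ c : V → Fin k, ∃ u v : V, r u v ∧ c u = c v

/-- A directed graph with edge relation `r` is *accessible* if every finite coloring
admits arbitrarily long monochromatic directed paths. -/
def Accessible {V : Type*} (r : V → V → Prop) : Prop :=
  ∀ k : ℕ, 1 ≤ k → ∀ c : V → Fin k, ∀ n : ℕ,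
    ∃ v : ℕ → V, (∀ i : ℕ, i < n → r (v i) (v (i + 1))) ∧
      ∀ i : ℕ, i ≤ n → c (v i) = c (v 0)

/-- A directed graph is *acyclic* if it has no directed cycles. -/
def Acyclic {V : Type*} (r : V → V → Prop) : Prop :=
  ¬ ∃ (m : ℕ) (v : ℕ → V), 1 ≤ m ∧ v m = v 0 ∧ ∀ i : ℕ, i < m → r (v i) (v (i + 1))

/-- An acyclic directed graph has infinite chromatic number iff it is accessible. -/
theorem acyclic_infChromatic_iff_accessible {V : Type*} (r : V → V → Prop)
    (hacyclic : Acyclic r) : InfChromatic r ↔ Accessible r := by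
  classical
  constructor
  · intro h k hk c n
    by_contra hno
    let P : V → ℕ → Prop := fun x m => ∃ w : ℕ → V, w 0 = x ∧
      (∀ i : ℕ, i < m → r (w i) (w (i + 1))) ∧ ∀ i : ℕ, i ≤ m → c (w i) = c x
    have hP0 : ∀ x, P x 0 := fun x => ⟨fun _ => x, rfl, fun i hi => by omega, fun _ _ => rfl⟩
    have hPn : ∀ x, ¬ P x n := by
      rintro x ⟨w, h0, h1, h2⟩
      exact hno ⟨w, h1, fun i hi => by rw [h2 i hi, h0]⟩
    let g : V → ℕ := fun x => Nat.findGreatest (P x) n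
    have hg : ∀ x, P x (g x) := fun x => Nat.findGreatest_spec (Nat.zero_le n) (hP0 x)
    have hgn : ∀ x, g x < n := by
      intro x
      refine lt_of_le_of_ne (Nat.findGreatest_le n) fun he => hPn x ?_
      have := hg x
      rwa [he] at this
    let d : V → Fin (k * (n + 1)) := fun x =>
      finProdFinEquiv (c x, (⟨g x, (hgn x).trans (Nat.lt_succ_self n)⟩ : Fin (n + 1)))
    obtain ⟨u, v, huv, hd⟩ := h (k * (n + 1)) (Nat.mul_pos hk (Nat.succ_pos n)) d
    have hd' := finProdFinEquiv.injective hd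
    simp only [Prod.mk.injEq, Fin.mk.injEq] at hd'
    obtain ⟨hc, hguv⟩ := hd'
    obtain ⟨w, h0, h1, h2⟩ := hg v
    have hPu : P u (g v + 1) := by
      refine ⟨fun i => Nat.casesOn i u w, rfl, ?_, ?_⟩
      · rintro (_ | i) hi
        · simpa [h0] using huv
        · exact h1 i (by omega)
      · rintro (_ | i) hi
        · rfl
        · exact (h2 i (by omega)).trans hc.symm
    have : g v + 1 ≤ g u := Nat.le_findGreatest (hgn v) hPu
    omega
  · intro h k hk c
    obtain ⟨v, h1, h2⟩ := h k hk c 1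
    exact ⟨v 0, v 1, h1 0 (by omega), (h2 1 le_rfl).symm⟩
end

section
/- Let G be a directed graph with no loops, given by an irreflexive edge relation r : V → V → Prop. Then G has infinite chromatic number if and only if G is accessible. -/
/-- A loopless directed graph has infinite chromatic number iff it is accessible. -/
theorem loopless_infChromatic_iff_accessible {V : Type*} (r : V → V → Prop)
    (hloopless : ∀ v : V, ¬ r v v) : InfChromatic r ↔ Accessible r := by
  classical
  constructor
  · intro h k hk c n
    by_contra hno
    let P : V → ℕ → Prop := fun v m => ∃ w : ℕ → V, w 0 = v ∧
      (∀ i : ℕ, i < m → r (w i) (w (i + 1))) ∧ ∀ i : ℕ, i ≤ m → c (w i) = c (w 0)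
    have hP0 : ∀ v, P v 0 := fun v => ⟨fun _ => v, rfl, by simp, by simp⟩
    have hPn : ∀ v, ¬ P v n := fun v ⟨w, _, h1, h2⟩ => hno ⟨w, h1, h2⟩
    let L : V → ℕ := fun v => Nat.findGreatest (P v) n
    have hL : ∀ v, P v (L v) := fun v => Nat.findGreatest_spec (Nat.zero_le n) (hP0 v)
    have hLle : ∀ v, L v ≤ n := fun v => Nat.findGreatest_le n
    have hLlt : ∀ v, L v < n := fun v =>
      lt_of_le_of_ne (hLle v) (fun e => hPn v (e ▸ hL v))
    obtain ⟨u, v, huv, he⟩ := h (k * (n + 1)) (Nat.mul_pos hk (Nat.succ_pos n))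
      (fun v => finProdFinEquiv (c v, (⟨L v, Nat.lt_succ_of_le (hLle v)⟩ : Fin (n + 1))))
    have he' := finProdFinEquiv.injective he
    simp only [Prod.mk.injEq, Fin.mk.injEq] at he'
    obtain ⟨hc, hl⟩ := he'
    obtain ⟨w, hw0, hw1, hw2⟩ := hL v
    have hPu : P u (L v + 1) := by
      refine ⟨fun i => Nat.casesOn i u w, rfl, ?_, ?_⟩
      · intro i hi
        cases i with
        | zero => simpa [hw0] using huv
        | succ j => exact hw1 j (by omega)
      · intro i hi
        cases i with
        | zero => rfl
        | succ j =>
          have := hw2 j (by omega)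
          rw [hw0] at this
          exact this.trans hc.symm
    have : L v + 1 ≤ L u := Nat.le_findGreatest (hLlt v) hPu
    omega
  · intro h k hk c
    obtain ⟨v, h1, h2⟩ := h k hk c 1
    exact ⟨v 0, v 1, h1 0 one_pos, (h2 1 le_rfl).symm⟩
end
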